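/- The number C_k of rooted 2-connected planar maps with k edges satisfies C_0 = 1 and C_k = 2·(3k−3)!/(k!·(2k−1)!) for k ≥ 1. -/

import Mathlib

/-- The number of cycles (including fixed points) of a permutation of `Fin m`. -/
def numCycles {m : ℕ} (f : Equiv.Perm (Fin m)) : ℕ :=
  m - f.cycleType.sum + f.cycleType.card

/-- A rooted (combinatorial, planar) map with `n` edges, encoded by a rotation
system on the `2n` darts (oriented edges): `σ` is the counterclockwise rotation
of darts around their tail vertex, `α` is the fixed-point-free involution pairing
the two darts of each edge, the group `⟨σ, α⟩` acts transitively on darts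
(connectedness), Euler's formula `V - E + F = 2` holds (planarity, i.e. genus
zero), and `root` is the distinguished root dart.  Vertices are the cycles of
`σ`, edges the cycles of `α`, faces the cycles of `σ * α`.  Isomorphism classes
of such structures (for `n ≥ 1`) are exactly rooted planar maps with `n` edges,
considered up to orientation-preserving homeomorphisms of the plane. -/
structure RMap (n : ℕ) where
  σ : Equiv.Perm (Fin (2 * n))
  α : Equiv.Perm (Fin (2 * n))
  root : Fin (2 * n)
  inv : ∀ d, α (α d) = d
  fpf : ∀ d, α d ≠ d
  conn : ∀ d e : Fin (2 * n),
    ∃ g ∈ Subgroup.closure ({σ, α} : Set (Equiv.Perm (Fin (2 * n)))), g d = e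
  euler : numCycles σ + numCycles (σ * α) = n + 2

/-- Root-preserving isomorphism of rooted maps: a relabelling of the darts
conjugating the rotation systems and preserving the root dart. -/
def RMapIso {n : ℕ} (M M' : RMap n) : Prop :=
  ∃ e : Equiv.Perm (Fin (2 * n)),
    (∀ d, e (M.σ d) = M'.σ (e d)) ∧ (∀ d, e (M.α d) = M'.α (e d)) ∧
      e M.root = M'.root

/-- The number of rooted planar maps with `n` edges: the number of isomorphism
classes of rooted map structures (with the convention that the trivial map is
the unique map with `0` edges). -/
noncomputable def mapCount (n : ℕ) : ℕ :=
  if n = 0 then 1 else Nat.card (Quot (@RMapIso n))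

/-- A rooted map is separable if its edge set can be partitioned into two
nonempty parts such that exactly one vertex is incident to edges of both parts.
Here an edge set is an `α`-invariant set `S` of darts, a vertex is a cycle of
`σ`, and a vertex is incident to an edge of `S` iff its `σ`-cycle meets `S`. -/
def RMap.Separable {n : ℕ} (M : RMap n) : Prop :=
  ∃ S : Finset (Fin (2 * n)), S.Nonempty ∧ Sᶜ.Nonempty ∧
    (∀ d ∈ S, M.α d ∈ S) ∧
    ∃ d₀ : Fin (2 * n),
      ((∃ a ∈ S, M.σ.SameCycle d₀ a) ∧ (∃ b ∈ Sᶜ, M.σ.SameCycle d₀ b)) ∧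
      ∀ d : Fin (2 * n), (∃ a ∈ S, M.σ.SameCycle d a) →
        (∃ b ∈ Sᶜ, M.σ.SameCycle d b) → M.σ.SameCycle d₀ d

/-- The number of rooted 2-connected (i.e. non-separable) planar maps with `k`
edges, with the convention `C 0 = 1`. -/
noncomputable def bconnCount (k : ℕ) : ℕ :=
  if k = 0 then 1
  else Nat.card (Quot (fun M M' : {M : RMap k // ¬ M.Separable} => RMapIso M.1 M'.1))

/-!
A planar map is nonseparable if and only if every vertex and every face share at most one corner.
If it has more than one edge, deleting its root edge leaves a chain of nonseparable blocks.
Detaching the first block `B` and joining the root edge directly to the rest of the chain gives a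
smaller nonseparable map `M`, which is not the link (the single edge that is not a loop). The map is
recovered from `B`, `M` and the number `j` of steps along the root face of `B` between its two
vertices of attachment, where `0 < j < deg B`, and its root face has degree `deg M + (deg B - j)`.

Let `F(z, y)` count nonseparable maps by edges and root face degree, and let `L = F - z y²` leave
out the link. Summing over `j` turns the decomposition into the catalytic equation
`L = z y + L · (F(z, y) - y F(z, 1)) / (y - 1)`, which has a unique solution. In terms of the
parameter `t` with `t (1 - t)² = z` it gives `F(z, 1) = 2 t - 3 t²`, which satisfies a linear
differential equation of order two, hence the hypergeometric recurrence of the closed formula.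
-/

open Equiv Equiv.Perm

/-- The number of cycles of a permutation of an arbitrary type, fixed points included.  On `Fin m`
it agrees with `numCycles`. -/
noncomputable def cycleCount {D : Type*} (g : Perm D) : ℕ :=
  Nat.card (Quotient (SameCycle.setoid g))

section Cycles

variable {D : Type*}

theorem sameCycle_self_apply (g : Perm D) (x : D) : g.SameCycle x (g x) :=
  sameCycle_apply_right.2 .rfl

theorem sameCycle_self_pow (g : Perm D) (x : D) (k : ℕ) : g.SameCycle x ((g ^ k) x) :=
  sameCycle_pow_right.2 .rfl

section Finite

variable [Finite D] {g : Perm D} {p : D → Prop} {x y : D}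

theorem sameCycle_induction (hp : ∀ z, p z → p (g z)) (h : g.SameCycle x y) (hx : p x) : p y := by
  obtain ⟨i, rfl⟩ := h.exists_nat_pow_eq
  clear h
  induction i with
  | zero => exact hx
  | succ k ih => rw [pow_succ', Perm.mul_apply]; exact hp _ ih

theorem iff_of_sameCycle (hp : ∀ z, p z → p (g z)) (h : g.SameCycle x y) : p x ↔ p y :=
  ⟨sameCycle_induction hp h, sameCycle_induction hp h.symm⟩

theorem apply_iff_of_forall_imp (hp : ∀ z, p z → p (g z)) (x : D) : p (g x) ↔ p x :=
  (iff_of_sameCycle hp (sameCycle_self_apply g x)).symm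

theorem sameCycle_setoid_le {r : Setoid D} (hr : ∀ z, r z (g z)) : SameCycle.setoid g ≤ r :=
  fun {x _} h => sameCycle_induction (fun z hz => r.trans hz (hr z)) h (r.refl x)

theorem exists_exit_of_sameCycle (h : g.SameCycle x y) (hx : p x) (hy : ¬ p y) :
    ∃ z, g.SameCycle x z ∧ p z ∧ ¬ p (g z) := by
  by_contra! hp
  exact hy (sameCycle_induction (p := fun z => g.SameCycle x z ∧ p z)
    (fun z hz => ⟨sameCycle_apply_right.2 hz.1, hp z hz.1 hz.2⟩) h ⟨.rfl, hx⟩).2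

end Finite

section CycleType

variable [Fintype D] [DecidableEq D] (f : Perm D)

/-- A complete invariant of the cycles of `f`: the point itself for a fixed point, the cycle
factor containing it for any other point. -/
def cycleLabel (x : D) : Function.fixedPoints f ⊕ f.cycleFactorsFinset :=
  if h : f x = x then .inl ⟨x, h⟩
  else .inr ⟨f.cycleOf x, cycleOf_mem_cycleFactorsFinset_iff.2 (mem_support.2 h)⟩

theorem cycleLabel_eq_iff {x y : D} : cycleLabel f x = cycleLabel f y ↔ f.SameCycle x y := by
  by_cases hx : f x = x <;> by_cases hy : f y = y <;> simp only [cycleLabel, hx, hy, dite_true,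
    dite_false, Sum.inl.injEq, Sum.inr.injEq, reduceCtorEq, Subtype.mk.injEq, false_iff]
  · exact ⟨fun h => (Subtype.mk.inj h).sameCycle f, fun h => Subtype.ext (h.eq_of_left hx)⟩
  · exact fun h => hy (h.apply_eq_self_iff.1 hx)
  · exact fun h => hx (h.apply_eq_self_iff.2 hy)
  · exact (sameCycle_iff_cycleOf_eq_of_mem_support (mem_support.2 hx) (mem_support.2 hy)).symm

theorem cycleLabel_surjective : Function.Surjective (cycleLabel f) := by
  rintro (⟨x, hx⟩ | ⟨c, hc⟩)
  · exact ⟨x, dif_pos hx⟩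
  · obtain ⟨⟨x, hx, -⟩, hcf⟩ := mem_cycleFactorsFinset_iff.1 hc
    have hxc : x ∈ c.support := mem_support.2 hx
    refine ⟨x, ?_⟩
    rw [cycleLabel, dif_neg (hcf x hxc ▸ hx)]
    exact congrArg Sum.inr (Subtype.ext (cycle_is_cycleOf hxc hc).symm)

theorem cycleCount_eq_cycleType :
    cycleCount f = Fintype.card D - f.cycleType.sum + f.cycleType.card := by
  have hker : SameCycle.setoid f = Setoid.ker (cycleLabel f) :=
    Setoid.ext fun _ _ => (cycleLabel_eq_iff f).symm
  have hcard : f.cycleType.card = Nat.card f.cycleFactorsFinset := by simp [cycleType_def]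
  rw [cycleCount, hker,
    Nat.card_congr (Setoid.quotientKerEquivOfSurjective _ (cycleLabel_surjective f)),
    Nat.card_sum, ← card_fixedPoints, hcard, Nat.card_eq_fintype_card]

theorem sign_eq_neg_one_pow_cycleCount : sign f = (-1) ^ (Fintype.card D + cycleCount f) := by
  obtain ⟨k, hk⟩ := Nat.exists_eq_add_of_le (sum_cycleType_le f)
  have hexp : Fintype.card D + cycleCount f = f.cycleType.sum + f.cycleType.card + 2 * k := by
    rw [cycleCount_eq_cycleType]; omega
  rw [sign_of_cycleType, hexp, pow_add _ _ (2 * k), pow_mul]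
  simp

end CycleType

end Cycles

section Merge

variable {D : Type*}

/-- The equivalence relation obtained from `r` by merging the classes of `u` and `v`. -/
noncomputable def mergeSetoid (r : Setoid D) (u v : D) : Setoid D :=
  open Classical in
  Setoid.ker (Function.update id (Quotient.mk r v) (Quotient.mk r u) ∘ Quotient.mk r)

variable {r : Setoid D} {u v x y : D}

theorem mergeSetoid_iff :
    mergeSetoid r u v x y ↔ r x y ∨ (r x u ∧ r y v) ∨ (r x v ∧ r y u) := by
  classical
  have hq {a b : D} : Quotient.mk r a = Quotient.mk r b ↔ r a b := Quotient.eq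
  rw [mergeSetoid, Setoid.ker_def]
  simp only [Function.comp_apply, Function.update_apply, id, hq]
  have := @r.symm'
  have := @r.trans'
  split_ifs <;> rw [hq] <;> grind [r.refl u]

theorem le_mergeSetoid : r ≤ mergeSetoid r u v := fun _ _ h => mergeSetoid_iff.2 (.inl h)

theorem mergeSetoid_rel : mergeSetoid r u v u v :=
  mergeSetoid_iff.2 (.inr (.inl ⟨r.refl u, r.refl v⟩))

theorem mergeSetoid_le {s : Setoid D} (h : r ≤ s) (huv : s u v) : mergeSetoid r u v ≤ s := by
  intro x y hxy
  rcases mergeSetoid_iff.1 hxy with k | ⟨k, k'⟩ | ⟨k, k'⟩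
  · exact h k
  · exact s.trans (h k) (s.trans huv (s.symm (h k')))
  · exact s.trans (h k) (s.trans (s.symm huv) (s.symm (h k')))

theorem mergeSetoid_eq_self (h : r u v) : mergeSetoid r u v = r :=
  le_antisymm (mergeSetoid_le le_rfl h) le_mergeSetoid

theorem card_quotient_le_of_le [Finite D] {s : Setoid D} (h : r ≤ s) :
    Nat.card (Quotient s) ≤ Nat.card (Quotient r) :=
  Nat.card_le_card_of_surjective (Quotient.map' id h)
    (Quotient.ind fun x => ⟨Quotient.mk r x, rfl⟩)

theorem card_quotient_mergeSetoid [Finite D] (h : ¬ r u v) :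
    Nat.card (Quotient (mergeSetoid r u v)) + 1 = Nat.card (Quotient r) := by
  classical
  have huv : Quotient.mk r u ≠ Quotient.mk r v := fun e => h (Quotient.exact e)
  have hrange : Set.range (Function.update id (Quotient.mk r v) (Quotient.mk r u) ∘ Quotient.mk r) =
      {Quotient.mk r v}ᶜ := by
    rw [Set.range_comp, Set.range_eq_univ.2 Quotient.mk_surjective, Set.image_univ]
    ext q
    simp only [Set.mem_range, Function.update_apply, id, Set.mem_compl_singleton_iff]
    refine ⟨?_, fun hq => ⟨q, if_neg hq⟩⟩
    rintro ⟨p, rfl⟩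
    split_ifs with hp
    exacts [huv, hp]
  rw [mergeSetoid, Nat.card_congr (Setoid.quotientKerEquivRange _)]
  convert (Set.ncard_compl_add_ncard {Quotient.mk r v}) using 2
  · rw [← hrange]; rfl
  · simp

end Merge

section SwapMul

variable {D : Type*} [Finite D] [DecidableEq D] {g : Perm D} {u v x y : D}

theorem sameCycle_swap_mul_of_not_sameCycle (h : ¬ g.SameCycle u v) :
    (swap u v * g).SameCycle u v := by
  by_contra hnot
  set f := swap u v * g with hf
  have hstep (z : D) : g z = swap u v (f z) := by simp [hf]
  have hclosed (z : D) (hz : f.SameCycle v z ∧ g.SameCycle v z) :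
      f.SameCycle v (f z) ∧ g.SameCycle v (f z) := by
    have hfz : f.SameCycle v (f z) := sameCycle_apply_right.2 hz.1
    have hgz : g.SameCycle v (g z) := sameCycle_apply_right.2 hz.2
    by_cases hv : f z = v
    · exact ⟨hfz, hv ▸ .rfl⟩
    · rw [hstep, swap_apply_of_ne_of_ne (fun e => hnot (e ▸ hfz).symm) hv] at hgz
      exact ⟨hfz, hgz⟩
  have hpred : g.SameCycle v (f.symm v) :=
    (sameCycle_induction hclosed (sameCycle_symm_apply_right.2 .rfl) ⟨.rfl, .rfl⟩).2
  have happly : g (f.symm v) = u := by rw [hstep]; simp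
  exact h (happly ▸ sameCycle_apply_right.2 hpred).symm

theorem setoid_le_setoid_swap_mul (huv : (swap u v * g).SameCycle u v) :
    SameCycle.setoid g ≤ SameCycle.setoid (swap u v * g) := by
  refine sameCycle_setoid_le fun z => ?_
  have hz := sameCycle_self_apply (swap u v * g) z
  rw [Perm.mul_apply] at hz
  rcases eq_or_ne (g z) u with hu | hu
  · rw [hu, swap_apply_left] at hz; exact hu ▸ hz.trans huv.symm
  rcases eq_or_ne (g z) v with hv | hv
  · rw [hv, swap_apply_right] at hz; exact hv ▸ hz.trans huv
  rwa [swap_apply_of_ne_of_ne hu hv] at hz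

theorem setoid_swap_mul_le_mergeSetoid :
    SameCycle.setoid (swap u v * g) ≤ mergeSetoid (SameCycle.setoid g) u v := by
  refine sameCycle_setoid_le fun z => mergeSetoid_iff.2 ?_
  have hz : SameCycle.setoid g z (g z) := sameCycle_self_apply g z
  have hrefl := (SameCycle.setoid g).refl
  rw [Perm.mul_apply]
  rcases eq_or_ne (g z) u with hu | hu
  · rw [hu, swap_apply_left]; exact .inr (.inl ⟨hu ▸ hz, hrefl v⟩)
  rcases eq_or_ne (g z) v with hv | hv
  · rw [hv, swap_apply_right]; exact .inr (.inr ⟨hv ▸ hz, hrefl u⟩)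
  rw [swap_apply_of_ne_of_ne hu hv]; exact .inl hz

theorem setoid_swap_mul_of_not_sameCycle (h : ¬ g.SameCycle u v) :
    SameCycle.setoid (swap u v * g) = mergeSetoid (SameCycle.setoid g) u v :=
  have huv := sameCycle_swap_mul_of_not_sameCycle h
  le_antisymm setoid_swap_mul_le_mergeSetoid (mergeSetoid_le (setoid_le_setoid_swap_mul huv) huv)

theorem setoid_swap_mul_le_of_sameCycle (h : g.SameCycle u v) :
    SameCycle.setoid (swap u v * g) ≤ SameCycle.setoid g :=
  setoid_swap_mul_le_mergeSetoid.trans (mergeSetoid_le le_rfl h)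

theorem cycleCount_swap_mul_of_not_sameCycle (h : ¬ g.SameCycle u v) :
    cycleCount (swap u v * g) + 1 = cycleCount g := by
  rw [cycleCount, setoid_swap_mul_of_not_sameCycle h]
  exact card_quotient_mergeSetoid h

theorem not_sameCycle_swap_mul (huv : u ≠ v) (h : g.SameCycle u v) :
    ¬ (swap u v * g).SameCycle u v := by
  intro h'
  have := Fintype.ofFinite D
  have hcount : cycleCount (swap u v * g) = cycleCount g := by
    rw [cycleCount, le_antisymm (setoid_swap_mul_le_of_sameCycle h) (setoid_le_setoid_swap_mul h'),
      cycleCount]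
  have hsign : sign (swap u v * g) = sign g := by
    rw [sign_eq_neg_one_pow_cycleCount, hcount, ← sign_eq_neg_one_pow_cycleCount]
  rw [Perm.sign_mul, sign_swap huv, mul_eq_right] at hsign
  exact absurd hsign (by decide)

theorem cycleCount_swap_mul_of_sameCycle (huv : u ≠ v) (h : g.SameCycle u v) :
    cycleCount (swap u v * g) = cycleCount g + 1 := by
  have hcount := cycleCount_swap_mul_of_not_sameCycle (not_sameCycle_swap_mul huv h)
  rwa [swap_mul_self_mul, eq_comm] at hcount

theorem cycleCount_swap_mul_le (g : Perm D) (u v : D) :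
    cycleCount (swap u v * g) ≤ cycleCount g + 1 := by
  rcases eq_or_ne u v with rfl | huv
  · rw [swap_self, ← Perm.one_def, one_mul]; omega
  by_cases h : g.SameCycle u v
  · exact (cycleCount_swap_mul_of_sameCycle huv h).le
  · have := cycleCount_swap_mul_of_not_sameCycle h; omega

theorem sameCycle_swap_mul_of_avoid (hu : ¬ g.SameCycle x u) (hv : ¬ g.SameCycle x v)
    (h : g.SameCycle x y) : (swap u v * g).SameCycle x y := by
  refine (sameCycle_induction (p := fun z => g.SameCycle x z ∧ (swap u v * g).SameCycle x z)
    (fun z hz => ?_) h ⟨.rfl, .rfl⟩).2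
  have hgz : g.SameCycle x (g z) := sameCycle_apply_right.2 hz.1
  have hz' := sameCycle_apply_right.2 hz.2
  have hzu : g z ≠ u := fun e => hu (e ▸ hgz)
  have hzv : g z ≠ v := fun e => hv (e ▸ hgz)
  rw [Perm.mul_apply, swap_apply_of_ne_of_ne hzu hzv] at hz'
  exact ⟨hgz, hz'⟩

end SwapMul

section Genus

variable {D : Type*}

/-- The partition of the darts into the connected components of the (hyper)map `(σ, α)`. -/
def componentSetoid (σ α : Perm D) : Setoid D := SameCycle.setoid σ ⊔ SameCycle.setoid α

theorem componentSetoid_left (σ α : Perm D) (x : D) : componentSetoid σ α x (σ x) :=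
  (le_sup_left : SameCycle.setoid σ ≤ componentSetoid σ α) (sameCycle_self_apply σ x)

theorem componentSetoid_right (σ α : Perm D) (x : D) : componentSetoid σ α x (α x) :=
  (le_sup_right : SameCycle.setoid α ≤ componentSetoid σ α) (sameCycle_self_apply α x)

theorem componentSetoid_comm (σ α : Perm D) : componentSetoid σ α = componentSetoid α σ :=
  sup_comm _ _

theorem componentSetoid_of_mem_closure {σ α g : Perm D}
    (hg : g ∈ Subgroup.closure ({σ, α} : Set (Perm D))) (x : D) : componentSetoid σ α x (g x) := by
  induction hg using Subgroup.closure_induction generalizing x with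
  | mem f hf =>
    rcases hf with rfl | rfl
    exacts [componentSetoid_left _ _ x, componentSetoid_right _ _ x]
  | one => exact (componentSetoid σ α).refl x
  | mul f g _ _ hf hg => exact (componentSetoid σ α).trans (hg x) (hf (g x))
  | inv f _ hf => exact (componentSetoid σ α).symm (by simpa using hf (f⁻¹ x))

variable [Finite D] {σ α : Perm D}

theorem componentSetoid_le {r : Setoid D} (hσ : ∀ x, r x (σ x)) (hα : ∀ x, r x (α x)) :
    componentSetoid σ α ≤ r :=
  sup_le (sameCycle_setoid_le hσ) (sameCycle_setoid_le hα)

theorem iff_of_componentSetoid {p : D → Prop} (hσ : ∀ z, p z → p (σ z)) (hα : ∀ z, p z → p (α z))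
    {x y : D} (h : componentSetoid σ α x y) : p x ↔ p y :=
  iff_of_eq (componentSetoid_le (r := Setoid.ker p)
    (fun z => propext (apply_iff_of_forall_imp hσ z).symm)
    (fun z => propext (apply_iff_of_forall_imp hα z).symm) h)

theorem componentSetoid_of_sameCycle_mul {x y : D} (h : (σ * α).SameCycle x y) :
    componentSetoid σ α x y :=
  sameCycle_setoid_le (fun z => (componentSetoid σ α).trans (componentSetoid_right σ α z)
    (componentSetoid_left σ α _)) h

theorem componentSetoid_swap_mul_le [DecidableEq D] (σ α : Perm D) (x y : D) :
    componentSetoid σ (swap x y * α) ≤ mergeSetoid (componentSetoid σ α) x y :=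
  sup_le (le_sup_left.trans le_mergeSetoid)
    (setoid_swap_mul_le_mergeSetoid.trans
      (mergeSetoid_le (le_sup_right.trans le_mergeSetoid) mergeSetoid_rel))

-- Multiplying `α` by a transposition changes the number of faces by at most one, and if it joins
-- two components it also joins two faces.
theorem cycleCount_mul_swap_mul_le [DecidableEq D] (σ β : Perm D) (x y : D) :
    cycleCount (σ * (swap x y * β)) + 2 * Nat.card (Quotient (componentSetoid σ β)) ≤
      cycleCount (σ * β) + 1 + 2 * Nat.card (Quotient (componentSetoid σ (swap x y * β))) := by
  have hmul : σ * (swap x y * β) = swap (σ x) (σ y) * (σ * β) := by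
    simp [Equiv.swap_apply_apply, mul_assoc]
  have hle := card_quotient_le_of_le (componentSetoid_swap_mul_le σ β x y)
  rw [hmul]
  by_cases hxy : componentSetoid σ β x y
  · rw [mergeSetoid_eq_self hxy] at hle
    have := cycleCount_swap_mul_le (σ * β) (σ x) (σ y)
    omega
  · have hface : ¬ (σ * β).SameCycle (σ x) (σ y) := fun h =>
      hxy <| (componentSetoid σ β).trans (componentSetoid_left σ β x) <|
        (componentSetoid σ β).trans (componentSetoid_of_sameCycle_mul h)
          ((componentSetoid σ β).symm (componentSetoid_left σ β y))
    have := card_quotient_mergeSetoid hxy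
    have := cycleCount_swap_mul_of_not_sameCycle hface
    omega

/-- Nonnegativity of the genus of a hypermap, summed over its components. -/
theorem euler_char_le (σ α : Perm D) :
    cycleCount σ + cycleCount α + cycleCount (σ * α) ≤
      Nat.card D + 2 * Nat.card (Quotient (componentSetoid σ α)) := by
  classical
  have := Fintype.ofFinite D
  induction hn : α.support.card using Nat.strong_induction_on generalizing α with
  | _ n ih =>
    rcases eq_or_ne α 1 with rfl | hα
    · have hσ : cycleCount σ ≤ Nat.card (Quotient (componentSetoid σ 1)) :=
        card_quotient_le_of_le (componentSetoid_le (sameCycle_self_apply σ) fun x => .refl σ x)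
      have h1 : cycleCount (1 : Perm D) ≤ Nat.card D :=
        Nat.card_le_card_of_surjective _ Quotient.mk_surjective
      rw [mul_one]; omega
    · obtain ⟨x, hx⟩ : ∃ x, α x ≠ x := by
        by_contra! h; exact hα (Equiv.ext h)
      have hI := ih _ (hn ▸ card_support_swap_mul hx) (swap x (α x) * α) rfl
      have hcount := cycleCount_swap_mul_of_sameCycle hx.symm (sameCycle_self_apply α x)
      have hstep := cycleCount_mul_swap_mul_le σ (swap x (α x) * α) x (α x)
      rw [swap_mul_self_mul] at hstep
      omega

/-- Connectedness of the hypermap `(σ, α)`. -/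
def IsConnectedMap (σ α : Perm D) : Prop := ∀ x y, componentSetoid σ α x y

/-- Every vertex and every face share at most one corner.  For a planar map this is equivalent to
nonseparability: in a planar drawing, a face visiting a vertex twice exhibits it as a cut vertex. -/
def Nonseparable (σ α : Perm D) : Prop :=
  ∀ x y, σ.SameCycle x y → (σ * α).SameCycle x y → x = y

/-- Connected planar nonseparable (hyper)maps: vertices, edges and faces are the cycles of `σ`, `α`
and `σ * α`, and planarity is the equality case of `euler_char_le`. -/
structure IsNonseparableMap (σ α : Perm D) : Prop where
  connected : IsConnectedMap σ α
  euler : cycleCount σ + cycleCount α + cycleCount (σ * α) = Nat.card D + 2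
  nonseparable : Nonseparable σ α

theorem IsConnectedMap.card_component_le_one (h : IsConnectedMap σ α) :
    Nat.card (Quotient (componentSetoid σ α)) ≤ 1 :=
  Finite.card_le_one_iff_subsingleton.2
    ⟨fun s t => Quotient.inductionOn₂ s t fun x y => Quotient.sound (h x y)⟩

theorem IsConnectedMap.euler_char_le_two (h : IsConnectedMap σ α) :
    cycleCount σ + cycleCount α + cycleCount (σ * α) ≤ Nat.card D + 2 := by
  have := euler_char_le σ α
  have := h.card_component_le_one
  omega

theorem IsConnectedMap.swap_mul [DecidableEq D] {x y : D} (h : IsConnectedMap σ α)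
    (hxy : componentSetoid (swap x y * σ) α x y) : IsConnectedMap (swap x y * σ) α := by
  intro u v
  have hle := componentSetoid_swap_mul_le α (swap x y * σ) x y
  rw [swap_mul_self_mul, componentSetoid_comm α σ, componentSetoid_comm α, mergeSetoid_eq_self hxy]
    at hle
  exact hle (h u v)

-- Splitting a corner pair shared by a vertex and a face adds both a vertex and a face.
theorem not_componentSetoid_swap_mul [DecidableEq D] {x y : D} (h : IsConnectedMap σ α)
    (heuler : cycleCount σ + cycleCount α + cycleCount (σ * α) = Nat.card D + 2) (hne : x ≠ y)
    (hvertex : σ.SameCycle x y) (hface : (σ * α).SameCycle x y) :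
    ¬ componentSetoid (swap x y * σ) α x y := fun hxy => by
  have := (h.swap_mul hxy).euler_char_le_two
  have := cycleCount_swap_mul_of_sameCycle hne hvertex
  have hfaces := cycleCount_swap_mul_of_sameCycle hne hface
  rw [← mul_assoc] at hfaces
  omega

theorem exists_mem_closure_of_componentSetoid {x y : D} (h : componentSetoid σ α x y) :
    ∃ g ∈ Subgroup.closure ({σ, α} : Set (Perm D)), g x = y := by
  refine (iff_of_componentSetoid (p := fun z => ∃ g ∈ Subgroup.closure {σ, α}, g x = z)
    ?_ ?_ h).1 ⟨1, one_mem _, rfl⟩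
  · rintro _ ⟨g, hg, rfl⟩
    exact ⟨σ * g, mul_mem (Subgroup.subset_closure (by simp)) hg, rfl⟩
  · rintro _ ⟨g, hg, rfl⟩
    exact ⟨α * g, mul_mem (Subgroup.subset_closure (by simp)) hg, rfl⟩

theorem two_mul_cycleCount_of_involution (hinv : ∀ x, α (α x) = x) (hfpf : ∀ x, α x ≠ x) :
    2 * cycleCount α = Nat.card D := by
  classical
  have := Fintype.ofFinite D
  have hsq : α ^ 2 = 1 := Equiv.ext hinv
  have hsupp : α.support = Finset.univ := Finset.eq_univ_of_forall fun x => mem_support.2 (hfpf x)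
  have hsum := sum_cycleType α
  rw [cycleType_of_pow_prime_eq_one hsq, Multiset.sum_replicate, hsupp, Finset.card_univ] at hsum
  rw [cycleCount_eq_cycleType, sum_cycleType, hsupp, Finset.card_univ, Nat.card_eq_fintype_card]
  simp only [smul_eq_mul] at hsum
  omega

end Genus

section Separable

theorem numCycles_eq_cycleCount {m : ℕ} (f : Perm (Fin m)) : numCycles f = cycleCount f := by
  rw [cycleCount_eq_cycleType, numCycles, Fintype.card_fin]

variable {n : ℕ} (M : RMap n)

theorem RMap.isConnectedMap : IsConnectedMap M.σ M.α := fun x y => by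
  obtain ⟨g, hg, rfl⟩ := M.conn x y
  exact componentSetoid_of_mem_closure hg x

theorem RMap.euler_char :
    cycleCount M.σ + cycleCount M.α + cycleCount (M.σ * M.α) = Nat.card (Fin (2 * n)) + 2 := by
  have hedges := two_mul_cycleCount_of_involution M.inv M.fpf
  have heuler := M.euler
  rw [numCycles_eq_cycleCount, numCycles_eq_cycleCount] at heuler
  rw [Nat.card_fin] at hedges ⊢
  omega

theorem RMap.separable_of_not_nonseparable (h : ¬ Nonseparable M.σ M.α) : M.Separable := by
  classical
  simp only [Nonseparable, not_forall] at h
  obtain ⟨d, d', hvertex, hface, hne⟩ := h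
  set r := componentSetoid (swap d d' * M.σ) M.α with hr
  have hσ : ∀ z, M.σ z = swap d d' ((swap d d' * M.σ) z) := fun z => by simp
  have hd' : ¬ r d d' :=
    not_componentSetoid_swap_mul M.isConnectedMap M.euler_char hne hvertex hface
  refine ⟨Finset.univ.filter (r d), ⟨d, by simp⟩, ⟨d', by simpa using hd'⟩, ?_, d,
    ⟨⟨d, by simp, .rfl⟩, ⟨d', by simpa using hd', hvertex⟩⟩, ?_⟩
  · intro z hz
    simp only [Finset.mem_filter, Finset.mem_univ, true_and] at hz ⊢
    exact r.trans hz (componentSetoid_right _ _ z)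
  · rintro z ⟨x, hx, hzx⟩ ⟨y, hy, hzy⟩
    simp only [Finset.mem_filter, Finset.mem_univ, true_and, Finset.mem_compl] at hx hy
    -- Only at `d` or `d'` can the rotation at a vertex leave the component of `d`.
    obtain ⟨w, hxw, hw, hσw⟩ := exists_exit_of_sameCycle (hzx.symm.trans hzy) hx hy
    have hw' : r d ((swap d d' * M.σ) w) := r.trans hw (componentSetoid_left _ _ w)
    have hdw : M.σ.SameCycle d (M.σ w) := by
      rw [hσ] at hσw ⊢
      generalize (swap d d' * M.σ) w = v at hσw hw'
      rcases eq_or_ne v d with rfl | hvd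
      · rwa [swap_apply_left]
      rcases eq_or_ne v d' with rfl | hvd'
      · rw [swap_apply_right]
      · rw [swap_apply_of_ne_of_ne hvd hvd'] at hσw
        exact absurd hw' hσw
    exact (sameCycle_apply_right.1 hdw).trans (hxw.symm.trans hzx.symm)

theorem RMap.not_nonseparable_of_separable (h : M.Separable) : ¬ Nonseparable M.σ M.α := by
  obtain ⟨S, -, -, hα, d₀, ⟨⟨s, hs, hds⟩, ⟨t, ht, hdt⟩⟩, hcut⟩ := h
  intro hns
  have hαc : ∀ z, z ∉ S → M.α z ∉ S := fun z hz h => hz (by rw [← M.inv z]; exact hα _ h)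
  -- The face entered when the rotation around the cut vertex leaves `S` at `x` returns to `S`
  -- through the cut vertex.
  obtain ⟨x, hsx, hx, hσx⟩ := exists_exit_of_sameCycle (p := (· ∈ S)) (hds.symm.trans hdt) hs
    (Finset.mem_compl.1 ht)
  have hface : (M.σ * M.α).SameCycle (M.σ x) (M.α x) := by
    have := sameCycle_self_apply (M.σ * M.α) (M.α x)
    rw [Perm.mul_apply, M.inv] at this
    exact this.symm
  obtain ⟨z, hxz, hz, hσz⟩ := exists_exit_of_sameCycle (p := (· ∉ S)) hface hσx
    (not_not.2 (hα _ hx))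
  rw [not_not, Perm.mul_apply] at hσz
  have hz₀ : M.σ.SameCycle d₀ (M.σ (M.α z)) := hcut _ ⟨_, hσz, .rfl⟩
    ⟨M.α z, Finset.mem_compl.2 (hαc _ hz), (sameCycle_self_apply M.σ _).symm⟩
  have hx₀ : M.σ.SameCycle d₀ (M.σ x) := sameCycle_apply_right.2 (hds.trans hsx)
  have := hns (M.σ x) (M.σ (M.α z)) (hx₀.symm.trans hz₀) (sameCycle_apply_right.2 hxz)
  exact hσx (this ▸ hσz)

theorem RMap.isNonseparableMap (h : ¬ M.Separable) : IsNonseparableMap M.σ M.α :=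
  ⟨M.isConnectedMap, M.euler_char, by_contra fun hn => h (M.separable_of_not_nonseparable hn)⟩

end Separable

section CycleLength

variable {D : Type*}

/-- The length of the cycle of `f` through `x`. -/
noncomputable def cycleLength (f : Perm D) (x : D) : ℕ := Function.minimalPeriod f x

theorem pow_cycleLength_apply (f : Perm D) (x : D) : (f ^ cycleLength f x) x = x := by
  rw [← iterate_eq_pow]; exact Function.iterate_minimalPeriod

theorem cycleLength_pos [Finite D] (f : Perm D) (x : D) : 0 < cycleLength f x :=
  Function.minimalPeriod_pos_of_mem_periodicPts
    (Function.Injective.mem_periodicPts f.injective x)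

theorem cycleLength_le {f : Perm D} {x : D} {k : ℕ} (hk : 0 < k) (h : (f ^ k) x = x) :
    cycleLength f x ≤ k :=
  Function.IsPeriodicPt.minimalPeriod_le hk (by
    rw [Function.IsPeriodicPt, Function.IsFixedPt, iterate_eq_pow, h])

theorem pow_apply_inj_of_lt {f : Perm D} {x : D} {k l : ℕ} (hk : k < cycleLength f x)
    (hl : l < cycleLength f x) (h : (f ^ k) x = (f ^ l) x) : k = l :=
  Function.iterate_injOn_Iio_minimalPeriod (f := f) (x := x) hk hl (by
    simpa only [iterate_eq_pow] using h)

theorem pow_apply_ne_self {f : Perm D} {x : D} {k : ℕ} (hk : 0 < k) (hlt : k < cycleLength f x) :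
    (f ^ k) x ≠ x :=
  fun h => (cycleLength_le hk h).not_gt hlt

theorem exists_lt_cycleLength_of_sameCycle [Finite D] {f : Perm D} {x y : D}
    (h : f.SameCycle x y) : ∃ k < cycleLength f x, (f ^ k) x = y := by
  obtain ⟨i, rfl⟩ := h.exists_nat_pow_eq
  refine ⟨i % cycleLength f x, Nat.mod_lt _ (cycleLength_pos f x), ?_⟩
  rw [← iterate_eq_pow, ← iterate_eq_pow, cycleLength, Function.iterate_mod_minimalPeriod_eq]

theorem pow_succ_apply_left (f : Perm D) (k : ℕ) (x : D) : (f ^ (k + 1)) x = f ((f ^ k) x) := by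
  rw [pow_succ', Perm.mul_apply]

theorem pow_apply_eq_of_forall_lt {f g : Perm D} {x : D} {n : ℕ}
    (h : ∀ i < n, f ((g ^ i) x) = (g ^ (i + 1)) x) : (f ^ n) x = (g ^ n) x := by
  induction n with
  | zero => rfl
  | succ n ih =>
    rw [pow_succ_apply_left, ih fun i hi => h i (by omega), h n (by omega)]

end CycleLength

section Semiconj

open Function (Semiconj)

variable {D D' : Type*} {g : Perm D} {g' : Perm D'} {e : D ≃ D'}

theorem semiconj_symm (h : Semiconj e g g') : Semiconj e.symm g' g := fun y => by
  rw [symm_apply_eq, h, apply_symm_apply]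

theorem semiconj_mul {f : Perm D} {f' : Perm D'} (hf : Semiconj e f f') (hg : Semiconj e g g') :
    Semiconj e ⇑(f * g) ⇑(f' * g') :=
  hf.comp_right hg

theorem semiconj_pow (h : Semiconj e g g') (k : ℕ) : Semiconj e ⇑(g ^ k) ⇑(g' ^ k) := by
  simpa only [iterate_eq_pow] using h.iterate_right k

theorem sameCycle_map [Finite D] (h : Semiconj e g g') {x y : D} (hxy : g.SameCycle x y) :
    g'.SameCycle (e x) (e y) :=
  sameCycle_induction (p := fun z => g'.SameCycle (e x) (e z))
    (fun z hz => by rw [h]; exact sameCycle_apply_right.2 hz) hxy .rfl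

theorem cycleLength_map (h : Semiconj e g g') (x : D) :
    cycleLength g' (e x) = cycleLength g x :=
  Function.minimalPeriod_eq_minimalPeriod_iff.2 fun n => by
    rw [Function.IsPeriodicPt, Function.IsPeriodicPt, Function.IsFixedPt, Function.IsFixedPt,
      ← h.iterate_right n x, e.injective.eq_iff]

end Semiconj

section Pieces

variable {D : Type*} [Finite D] {g g' : Perm D} {A B : D → Prop}

theorem sameCycle_or_of_eq_off (hA : ∀ x, A x → A (g' x)) (hB : ∀ x, B x → B (g' x))
    (hg : ∀ x, ¬ A x → ¬ B x → g' x = g x) {x y : D} (h : g'.SameCycle x y) :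
    g.SameCycle x y ∨ (A x ∧ A y) ∨ (B x ∧ B y) := by
  by_cases hAx : A x
  · exact .inr (.inl ⟨hAx, sameCycle_induction hA h hAx⟩)
  by_cases hBx : B x
  · exact .inr (.inr ⟨hBx, sameCycle_induction hB h hBx⟩)
  refine .inl (sameCycle_induction (p := fun z => g.SameCycle x z ∧ ¬ A z ∧ ¬ B z)
    (fun z hz => ⟨?_, ?_, ?_⟩) h ⟨.rfl, hAx, hBx⟩).1
  · rw [hg z hz.2.1 hz.2.2]
    exact sameCycle_apply_right.2 hz.1
  · rw [apply_iff_of_forall_imp hA]; exact hz.2.1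
  · rw [apply_iff_of_forall_imp hB]; exact hz.2.2

end Pieces

section Series

variable {D : Type*}

/-- Two disjoint nonseparable planar maps, carried by the dart sets `Sᶜ` and `S`, together with the
data for inserting the second one into the root edge of the first: the root darts `a` and `b`, and
the corner `c` reached from `b` after `j` steps along its face. -/
structure SeriesPair (σ α : Perm D) (S : D → Prop) (a b c : D) (j : ℕ) : Prop where
  vertex_mem : ∀ x, S x → S (σ x)
  edge_mem : ∀ x, S x → S (α x)
  b_mem : S b
  a_notMem : ¬ S a
  apply_a_ne : σ a ≠ a
  pos : 0 < j
  lt_cycleLength : j < cycleLength (σ * α) b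
  pow_b : ((σ * α) ^ j) b = c
  nonseparable : Nonseparable σ α
  componentSetoid_of_iff : ∀ x y, (S x ↔ S y) → componentSetoid σ α x y
  euler : cycleCount σ + cycleCount α + cycleCount (σ * α) = Nat.card D + 4

open scoped Classical in
/-- The permutation `a ↦ c ↦ q ↦ b ↦ a`. -/
noncomputable def glue (a b c q : D) : Perm D := swap c q * swap a b * swap a q

/-- The rotation of the series insertion: the root edge is detached from its origin and attached to
that of `b`, and the rest of its former origin is merged with the origin of `c`. -/
noncomputable def glued (σ : Perm D) (a b c : D) : Perm D := glue a b c (σ a) * σ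

open scoped Classical in
theorem glued_eq (σ : Perm D) (a b c : D) :
    glued σ a b c = swap c (σ a) * (swap a b * (swap a (σ a) * σ)) := by
  simp only [glued, glue, mul_assoc]

theorem glue_of_ne {a b c q x : D} (ha : x ≠ a) (hb : x ≠ b) (hc : x ≠ c) (hq : x ≠ q) :
    glue a b c q x = x := by
  simp only [glue, Perm.mul_apply, swap_apply_of_ne_of_ne, ne_eq, ha, hb, hc, hq,
    not_false_eq_true]

theorem map_glue {D' : Type*} (e : D ≃ D') (a b c q z : D) :
    e (glue a b c q z) = glue (e a) (e b) (e c) (e q) (e z) := by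
  classical
  simp only [glue, Perm.mul_apply, e.injective.map_swap]

theorem semiconj_glued {D' : Type*} {e : D ≃ D'} {σ : Perm D} {σ' : Perm D'}
    (h : Function.Semiconj e σ σ') (a b c : D) :
    Function.Semiconj e ⇑(glued σ a b c) ⇑(glued σ' (e a) (e b) (e c)) := fun x => by
  rw [glued, glued, Perm.mul_apply, Perm.mul_apply, map_glue, h, h]

theorem rel_swap_apply [DecidableEq D] {r : Setoid D} {u v : D} (h : r u v) (x : D) :
    r x (swap u v x) := by
  rcases eq_or_ne x u with rfl | hu
  · rwa [swap_apply_left]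
  rcases eq_or_ne x v with rfl | hv
  · rw [swap_apply_right]
    exact r.symm h
  · rw [swap_apply_of_ne_of_ne hu hv]

theorem rel_glue_apply {r : Setoid D} {a b c q : D} (hb : r a b) (hc : r a c) (hq : r a q) (x : D) :
    r x (glue a b c q x) := by
  classical
  exact r.trans (rel_swap_apply hq x) <| r.trans (rel_swap_apply hb _) <|
    rel_swap_apply (r.trans (r.symm hc) hq) _

theorem glued_mul_apply (σ α : Perm D) (a b c x : D) :
    (glued σ a b c * α) x = glue a b c (σ a) ((σ * α) x) := rfl

namespace SeriesPair

variable {σ α : Perm D} {S : D → Prop} {a b c x y : D} {j k : ℕ} (H : SeriesPair σ α S a b c j)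

include H

theorem face_b_c : (σ * α).SameCycle b c := H.pow_b ▸ sameCycle_self_pow _ _ _

theorem c_ne_b : c ≠ b := H.pow_b ▸ pow_apply_ne_self H.pos H.lt_cycleLength

theorem not_vertex_b_c : ¬ σ.SameCycle b c :=
  fun h => H.c_ne_b (H.nonseparable _ _ h H.face_b_c).symm

theorem not_face_a_apply_a : ¬ (σ * α).SameCycle a (σ a) := fun h =>
  H.apply_a_ne (H.nonseparable _ _ (sameCycle_self_apply σ a) h).symm

theorem ne_a (hx : S x) : x ≠ a := fun h => H.a_notMem (h ▸ hx)

theorem pow_b_ne_c (hj : k ≠ j) (hk : k < cycleLength (σ * α) b) : ((σ * α) ^ k) b ≠ c := fun h =>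
  hj (pow_apply_inj_of_lt hk H.lt_cycleLength (h.trans H.pow_b.symm))

theorem pow_add_b : ((σ * α) ^ (j + k)) b = ((σ * α) ^ k) c := by
  rw [add_comm, pow_add, Perm.mul_apply, H.pow_b]

theorem not_vertex_c_pow_b (hk : k < cycleLength (σ * α) b) (hj : k ≠ j) :
    ¬ σ.SameCycle c (((σ * α) ^ k) b) := fun h =>
  H.pow_b_ne_c hj hk (H.nonseparable _ _ h
    (H.face_b_c.symm.trans (sameCycle_self_pow _ b k))).symm

theorem not_vertex_b_pow_b (hpos : 0 < k) (hk : k < cycleLength (σ * α) b) :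
    ¬ σ.SameCycle b (((σ * α) ^ k) b) := fun h =>
  pow_apply_ne_self hpos hk (H.nonseparable _ _ h (sameCycle_self_pow _ b k)).symm

variable [Finite D]

theorem mem_iff_of_vertex (h : σ.SameCycle x y) : S x ↔ S y := iff_of_sameCycle H.vertex_mem h

theorem mem_iff_of_face (h : (σ * α).SameCycle x y) : S x ↔ S y :=
  iff_of_sameCycle (g := σ * α) (p := S) (fun z hz => H.vertex_mem (α z) (H.edge_mem z hz)) h

theorem c_mem : S c := (H.mem_iff_of_face H.face_b_c).1 H.b_mem

theorem apply_a_notMem : ¬ S (σ a) :=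
  (H.mem_iff_of_vertex (sameCycle_self_apply σ a)).not.1 H.a_notMem

theorem pow_b_mem (k : ℕ) : S (((σ * α) ^ k) b) :=
  (H.mem_iff_of_face (sameCycle_self_pow _ b k)).1 H.b_mem

theorem ne_apply_a (hx : S x) : x ≠ σ a := fun h => H.apply_a_notMem (h ▸ hx)

theorem glue_a : glue a b c (σ a) a = c := by
  classical
  simp [glue, swap_apply_of_ne_of_ne H.apply_a_ne (H.ne_apply_a H.b_mem).symm]

theorem glue_apply_a : glue a b c (σ a) (σ a) = b := by
  classical
  simp [glue, swap_apply_of_ne_of_ne H.c_ne_b.symm (H.ne_apply_a H.b_mem)]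

theorem glue_b : glue a b c (σ a) b = a := by
  classical
  simp [glue, swap_apply_of_ne_of_ne (H.ne_a H.b_mem) (H.ne_apply_a H.b_mem),
    swap_apply_of_ne_of_ne (H.ne_a H.c_mem).symm H.apply_a_ne.symm]

theorem glue_c : glue a b c (σ a) c = σ a := by
  classical
  simp [glue, swap_apply_of_ne_of_ne (H.ne_a H.c_mem) (H.ne_apply_a H.c_mem),
    swap_apply_of_ne_of_ne (H.ne_a H.c_mem) H.c_ne_b]

theorem glue_of_mem (hx : S x) (hb : x ≠ b) (hc : x ≠ c) : glue a b c (σ a) x = x :=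
  glue_of_ne (H.ne_a hx) hb hc (H.ne_apply_a hx)

theorem glue_of_notMem (hx : ¬ S x) (ha : x ≠ a) (hq : x ≠ σ a) : glue a b c (σ a) x = x :=
  glue_of_ne ha (fun h => hx (h ▸ H.b_mem)) (fun h => hx (h ▸ H.c_mem)) hq

theorem glued_a : glued σ a b c a = b := H.glue_apply_a

theorem not_sameCycle_c_apply_a [DecidableEq D] :
    ¬ (swap a b * (swap a (σ a) * σ)).SameCycle c (σ a) := fun h =>
  H.apply_a_notMem <| (H.mem_iff_of_vertex <| sameCycle_induction (p := σ.SameCycle c)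
    (fun z hz => by
      have hz' : σ.SameCycle c (σ z) := sameCycle_apply_right.2 hz
      have hS := (H.mem_iff_of_vertex hz').1 H.c_mem
      have hb : σ z ≠ b := fun e => H.not_vertex_b_c (e ▸ hz'.symm)
      rwa [Perm.mul_apply, Perm.mul_apply, swap_apply_of_ne_of_ne (H.ne_a hS) (H.ne_apply_a hS),
        swap_apply_of_ne_of_ne (H.ne_a hS) hb]) h .rfl).1 H.c_mem

theorem vertex_glued_c_apply_a : (glued σ a b c).SameCycle c (σ a) := by
  classical
  rw [glued_eq]
  exact sameCycle_swap_mul_of_not_sameCycle H.not_sameCycle_c_apply_a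

theorem cycleCount_glued : cycleCount (glued σ a b c) + 1 = cycleCount σ := by
  classical
  have hdetach : (swap a (σ a) * σ) a = a := by simp
  have hjoin_b : ¬ (swap a (σ a) * σ).SameCycle a b := fun h =>
    H.ne_a H.b_mem (h.eq_of_left hdetach).symm
  have := cycleCount_swap_mul_of_sameCycle H.apply_a_ne.symm (sameCycle_self_apply σ a)
  have := cycleCount_swap_mul_of_not_sameCycle hjoin_b
  have := cycleCount_swap_mul_of_not_sameCycle H.not_sameCycle_c_apply_a
  rw [glued_eq]
  omega

theorem cycleCount_glued_mul : cycleCount (glued σ a b c * α) + 1 = cycleCount (σ * α) := by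
  classical
  have hjoin := setoid_swap_mul_of_not_sameCycle H.not_face_a_apply_a
  have hjoin_b : ¬ (swap a (σ a) * (σ * α)).SameCycle a b := fun h => by
    have hab : mergeSetoid (SameCycle.setoid (σ * α)) a (σ a) a b := hjoin ▸ h
    rcases mergeSetoid_iff.1 hab with h | ⟨-, h⟩ | ⟨-, h⟩
    · exact H.a_notMem ((H.mem_iff_of_face h).2 H.b_mem)
    · exact H.apply_a_notMem ((H.mem_iff_of_face h).1 H.b_mem)
    · exact H.a_notMem ((H.mem_iff_of_face h).1 H.b_mem)
  have hsplit : (swap a b * (swap a (σ a) * (σ * α))).SameCycle c (σ a) := by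
    let r := SameCycle.setoid (swap a b * (swap a (σ a) * (σ * α)))
    have hle : SameCycle.setoid (swap a (σ a) * (σ * α)) ≤ r :=
      setoid_le_setoid_swap_mul (sameCycle_swap_mul_of_not_sameCycle hjoin_b)
    have hle' : SameCycle.setoid (σ * α) ≤ r := (hjoin ▸ le_mergeSetoid).trans hle
    have hq : r a (σ a) := hle (sameCycle_swap_mul_of_not_sameCycle H.not_face_a_apply_a)
    have hb : r a b := sameCycle_swap_mul_of_not_sameCycle hjoin_b
    exact r.trans (r.trans (r.symm (hle' H.face_b_c)) (r.symm hb)) hq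
  have := cycleCount_swap_mul_of_not_sameCycle H.not_face_a_apply_a
  have := cycleCount_swap_mul_of_not_sameCycle hjoin_b
  have := cycleCount_swap_mul_of_sameCycle (H.ne_apply_a H.c_mem) hsplit
  simp only [glued_eq, mul_assoc] at *
  omega

theorem euler_glued : cycleCount (glued σ a b c) + cycleCount α + cycleCount (glued σ a b c * α) =
    Nat.card D + 2 := by
  have := H.cycleCount_glued
  have := H.cycleCount_glued_mul
  have := H.euler
  omega

theorem glued_mul_pow_b (hj : k + 1 ≠ j) (hk : k + 1 < cycleLength (σ * α) b) :
    (glued σ a b c * α) (((σ * α) ^ k) b) = ((σ * α) ^ (k + 1)) b := by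
  rw [glued_mul_apply, ← pow_succ_apply_left, H.glue_of_mem (H.pow_b_mem _)
    (pow_apply_ne_self k.succ_pos hk) (H.pow_b_ne_c hj hk)]

theorem glued_mul_pow_b_of_eq (hk : k + 1 = j) :
    (glued σ a b c * α) (((σ * α) ^ k) b) = σ a := by
  rw [glued_mul_apply, ← pow_succ_apply_left, hk, H.pow_b, H.glue_c]

theorem glued_mul_pow_b_last (hk : k + 1 = cycleLength (σ * α) b) :
    (glued σ a b c * α) (((σ * α) ^ k) b) = a := by
  rw [glued_mul_apply, ← pow_succ_apply_left, hk, pow_cycleLength_apply, H.glue_b]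

theorem glued_mul_pow_a (hk : k + 1 < cycleLength (σ * α) a) :
    (glued σ a b c * α) (((σ * α) ^ k) a) = ((σ * α) ^ (k + 1)) a := by
  have hs : (σ * α).SameCycle a (((σ * α) ^ (k + 1)) a) := sameCycle_self_pow _ _ _
  rw [glued_mul_apply, ← pow_succ_apply_left, H.glue_of_notMem
    ((H.mem_iff_of_face hs).not.1 H.a_notMem) (pow_apply_ne_self k.succ_pos hk)
    (fun h => H.not_face_a_apply_a (h ▸ hs))]

theorem glued_pow_b (hk : k < j) : ((glued σ a b c * α) ^ k) b = ((σ * α) ^ k) b :=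
  pow_apply_eq_of_forall_lt fun i hi =>
    H.glued_mul_pow_b (by omega) (by have := H.lt_cycleLength; omega)

theorem glued_pow_j_b : ((glued σ a b c * α) ^ j) b = σ a := by
  obtain ⟨i, hi⟩ := Nat.exists_eq_add_one.2 H.pos
  conv_lhs => rw [hi]
  rw [pow_succ_apply_left, H.glued_pow_b (by omega), H.glued_mul_pow_b_of_eq hi.symm]

theorem glued_pow_c (hk : k < cycleLength (σ * α) b - j) :
    ((glued σ a b c * α) ^ k) c = ((σ * α) ^ (j + k)) b := by
  rw [H.pow_add_b]
  refine pow_apply_eq_of_forall_lt fun i hi => ?_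
  rw [← H.pow_add_b, ← H.pow_add_b, H.glued_mul_pow_b (by omega) (by omega), add_assoc]

theorem glued_pow_c_last : ((glued σ a b c * α) ^ (cycleLength (σ * α) b - j)) c = a := by
  have hlt := H.lt_cycleLength
  obtain ⟨i, hi⟩ := Nat.exists_eq_add_one.2 (Nat.sub_pos_of_lt hlt)
  rw [hi, pow_succ_apply_left, H.glued_pow_c (by omega), H.glued_mul_pow_b_last (by omega)]

theorem glued_pow_a (hk : k < cycleLength (σ * α) a) :
    ((glued σ a b c * α) ^ k) a = ((σ * α) ^ k) a :=
  pow_apply_eq_of_forall_lt fun i hi => H.glued_mul_pow_a (by omega)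

theorem glued_pow_a_last : ((glued σ a b c * α) ^ cycleLength (σ * α) a) a = c := by
  obtain ⟨i, hi⟩ := Nat.exists_eq_add_one.2 (cycleLength_pos (σ * α) a)
  rw [hi, pow_succ_apply_left, H.glued_pow_a (by omega), glued_mul_apply, ← pow_succ_apply_left,
    ← hi, pow_cycleLength_apply, H.glue_a]

theorem face_glued_c_a : (glued σ a b c * α).SameCycle c a :=
  SameCycle.symm ⟨cycleLength (σ * α) a, by rw [zpow_natCast, H.glued_pow_a_last]⟩

theorem cycleLength_glued : cycleLength (glued σ a b c * α) a =
    cycleLength (σ * α) a + (cycleLength (σ * α) b - j) := by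
  have ha := cycleLength_pos (σ * α) a
  refine le_antisymm (cycleLength_le (by omega) ?_) (not_lt.1 fun hlt => ?_)
  · rw [add_comm, pow_add, Perm.mul_apply, H.glued_pow_a_last, H.glued_pow_c_last]
  have hreturn := pow_cycleLength_apply (glued σ a b c * α) a
  have hpos := cycleLength_pos (glued σ a b c * α) a
  generalize cycleLength (glued σ a b c * α) a = n at hlt hreturn hpos
  rcases lt_or_ge n (cycleLength (σ * α) a) with hn | hn
  · exact pow_apply_ne_self hpos hn ((H.glued_pow_a hn).symm.trans hreturn)
  · obtain ⟨i, rfl⟩ := Nat.exists_eq_add_of_le' hn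
    rw [pow_add, Perm.mul_apply, H.glued_pow_a_last, H.glued_pow_c (by omega)] at hreturn
    exact H.ne_a (H.pow_b_mem _) hreturn

end SeriesPair

/-- The vertex of a series insertion that carries the root dart. -/
def RootVertex (σ : Perm D) (a b x : D) : Prop := x = a ∨ σ.SameCycle b x

/-- The vertex of a series insertion at which the inserted map ends. -/
def EndVertex (σ : Perm D) (a c x : D) : Prop := (x ≠ a ∧ σ.SameCycle a x) ∨ σ.SameCycle c x

/-- The face of a series insertion that carries the root dart. -/
def RootFace (σ α : Perm D) (a b : D) (j : ℕ) (x : D) : Prop :=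
  (σ * α).SameCycle a x ∨ ∃ k, j ≤ k ∧ k < cycleLength (σ * α) b ∧ ((σ * α) ^ k) b = x

/-- The face of a series insertion on the other side of the inserted map. -/
def OppositeFace (σ α : Perm D) (a b : D) (j : ℕ) (x : D) : Prop :=
  (σ * α).SameCycle (σ a) x ∨ ∃ k < j, ((σ * α) ^ k) b = x

/-- The vertex of the dart `k` steps after `b` along its face lies on the face of `a`. -/
def MeetsFaceAt (σ α : Perm D) (a b : D) (k : ℕ) : Prop :=
  ∃ x, σ.SameCycle x (((σ * α) ^ k) b) ∧ (σ * α).SameCycle x a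

theorem glued_apply_of_not_vertex {σ : Perm D} {a b c x : D} (hA : ¬ RootVertex σ a b x)
    (hB : ¬ EndVertex σ a c x) :
    glued σ a b c x = σ x := by
  refine glue_of_ne (fun h => hB ?_) (fun h => hA ?_) (fun h => hB ?_) (fun h => hA ?_)
  · exact .inl ⟨fun hx => hA (.inl hx), h ▸ (sameCycle_self_apply σ x).symm⟩
  · exact .inr (h ▸ (sameCycle_self_apply σ x).symm)
  · exact .inr (h ▸ (sameCycle_self_apply σ x).symm)
  · exact .inl (σ.injective h)

theorem rootFace_or_oppositeFace [Finite D] {σ α : Perm D} {a b x : D} (j : ℕ)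
    (h : (σ * α).SameCycle b x) :
    RootFace σ α a b j x ∨ OppositeFace σ α a b j x := by
  obtain ⟨k, hk, rfl⟩ := exists_lt_cycleLength_of_sameCycle h
  rcases lt_or_ge k j with hj | hj
  · exact .inr (.inr ⟨k, hj, rfl⟩)
  · exact .inl (.inr ⟨k, hj, hk, rfl⟩)

namespace SeriesPair

variable {σ α : Perm D} {S : D → Prop} {a b c x y : D} {j : ℕ} (H : SeriesPair σ α S a b c j)
  [Finite D]

include H

theorem rootVertex_glued (hx : RootVertex σ a b x) : RootVertex σ a b (glued σ a b c x) := by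
  rcases hx with rfl | hx
  · exact .inr (by rw [H.glued_a])
  have hx' : σ.SameCycle b (σ x) := sameCycle_apply_right.2 hx
  rw [glued, Perm.mul_apply]
  by_cases hb : σ x = b
  · exact .inl (hb ▸ H.glue_b)
  · rw [H.glue_of_mem ((H.mem_iff_of_vertex hx').1 H.b_mem) hb
      (fun h => H.not_vertex_b_c (h ▸ hx'))]
    exact .inr hx'

theorem endVertex_glued (hx : EndVertex σ a c x) : EndVertex σ a c (glued σ a b c x) := by
  rw [glued, Perm.mul_apply]
  rcases hx with ⟨hxa, hx⟩ | hx
  · have hx' : σ.SameCycle a (σ x) := sameCycle_apply_right.2 hx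
    by_cases ha : σ x = a
    · exact .inr (by rw [ha, H.glue_a])
    · rw [H.glue_of_notMem ((H.mem_iff_of_vertex hx').not.1 H.a_notMem) ha
        (fun h => hxa (σ.injective h))]
      exact .inl ⟨ha, hx'⟩
  · have hx' : σ.SameCycle c (σ x) := sameCycle_apply_right.2 hx
    by_cases hc : σ x = c
    · exact .inl (by rw [hc, H.glue_c]; exact ⟨H.apply_a_ne, sameCycle_self_apply σ a⟩)
    · rw [H.glue_of_mem ((H.mem_iff_of_vertex hx').1 H.c_mem)
        (fun h => H.not_vertex_b_c (h ▸ hx').symm) hc]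
      exact .inr hx'

theorem vertex_glued (h : (glued σ a b c).SameCycle x y) : σ.SameCycle x y ∨
    (RootVertex σ a b x ∧ RootVertex σ a b y) ∨ (EndVertex σ a c x ∧ EndVertex σ a c y) :=
  sameCycle_or_of_eq_off (A := RootVertex σ a b) (B := EndVertex σ a c)
    (fun _ => H.rootVertex_glued) (fun _ => H.endVertex_glued)
    (fun _ => glued_apply_of_not_vertex) h

theorem rootFace_glued (hx : RootFace σ α a b j x) :
    RootFace σ α a b j ((glued σ a b c * α) x) := by
  rcases hx with hx | ⟨k, hj, hk, rfl⟩
  · have hx' : (σ * α).SameCycle a ((σ * α) x) := sameCycle_apply_right.2 hx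
    rw [glued_mul_apply]
    by_cases ha : (σ * α) x = a
    · exact .inr ⟨j, le_rfl, H.lt_cycleLength, by rw [ha, H.glue_a, H.pow_b]⟩
    · rw [H.glue_of_notMem ((H.mem_iff_of_face hx').not.1 H.a_notMem) ha
        (fun h => H.not_face_a_apply_a (h ▸ hx'))]
      exact .inl hx'
  · rcases eq_or_ne (k + 1) (cycleLength (σ * α) b) with hlast | hlast
    · exact .inl (by rw [H.glued_mul_pow_b_last hlast])
    · exact .inr ⟨k + 1, by omega, by omega, (H.glued_mul_pow_b (by omega) (by omega)).symm⟩

theorem oppositeFace_glued (hx : OppositeFace σ α a b j x) :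
    OppositeFace σ α a b j ((glued σ a b c * α) x) := by
  rcases hx with hx | ⟨k, hj, rfl⟩
  · have hx' : (σ * α).SameCycle (σ a) ((σ * α) x) := sameCycle_apply_right.2 hx
    rw [glued_mul_apply]
    by_cases ha : (σ * α) x = σ a
    · exact .inr ⟨0, H.pos, by rw [ha, H.glue_apply_a]; rfl⟩
    · rw [H.glue_of_notMem ((H.mem_iff_of_face hx').not.1 H.apply_a_notMem)
        (fun h => H.not_face_a_apply_a (h ▸ hx').symm) ha]
      exact .inl hx'
  · rcases eq_or_ne (k + 1) j with hlast | hlast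
    · exact .inl (by rw [H.glued_mul_pow_b_of_eq hlast])
    · exact .inr ⟨k + 1, by omega,
        (H.glued_mul_pow_b hlast (by have := H.lt_cycleLength; omega)).symm⟩

theorem glued_mul_apply_of_not (hA : ¬ RootFace σ α a b j x) (hB : ¬ OppositeFace σ α a b j x) :
    (glued σ a b c * α) x = (σ * α) x := by
  have hb : ¬ (σ * α).SameCycle b ((σ * α) x) := fun h =>
    (rootFace_or_oppositeFace j (sameCycle_apply_right.1 h)).elim hA hB
  refine glue_of_ne (fun h => hA (.inl ?_)) (fun h => hb (h ▸ .rfl))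
    (fun h => hb (h ▸ H.face_b_c)) (fun h => hB (.inl ?_))
  · exact (show (σ * α) x = a from h) ▸ (sameCycle_self_apply (σ * α) x).symm
  · exact (show (σ * α) x = σ a from h) ▸ (sameCycle_self_apply (σ * α) x).symm

theorem face_glued (h : (glued σ a b c * α).SameCycle x y) : (σ * α).SameCycle x y ∨
    (RootFace σ α a b j x ∧ RootFace σ α a b j y) ∨
      (OppositeFace σ α a b j x ∧ OppositeFace σ α a b j y) :=
  sameCycle_or_of_eq_off (A := RootFace σ α a b j) (B := OppositeFace σ α a b j)
    (fun _ => H.rootFace_glued) (fun _ => H.oppositeFace_glued)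
    (fun _ => H.glued_mul_apply_of_not) h

theorem vertex_of_vertex_glued (h : (glued σ a b c).SameCycle x y) (hS : S x ↔ S y) :
    σ.SameCycle x y := by
  have hb {z} : σ.SameCycle b z → S z := fun h => (H.mem_iff_of_vertex h).1 H.b_mem
  have hc {z} : σ.SameCycle c z → S z := fun h => (H.mem_iff_of_vertex h).1 H.c_mem
  have ha {z} : σ.SameCycle a z → ¬ S z := fun h => (H.mem_iff_of_vertex h).not.1 H.a_notMem
  rcases H.vertex_glued h with h | ⟨rfl | hx, rfl | hy⟩ | ⟨hx | hx, hy | hy⟩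
  · exact h
  · exact .rfl
  · exact absurd (hS.2 (hb hy)) H.a_notMem
  · exact absurd (hS.1 (hb hx)) H.a_notMem
  · exact hx.symm.trans hy
  · exact hx.2.symm.trans hy.2
  · exact absurd (hS.2 (hc hy)) (ha hx.2)
  · exact absurd (hS.1 (hc hx)) (ha hy.2)
  · exact hx.symm.trans hy

theorem vertex_glued_crossing (h : (glued σ a b c).SameCycle x y) (hx : S x) (hy : ¬ S y) :
    (σ.SameCycle b x ∧ y = a) ∨ (σ.SameCycle c x ∧ σ.SameCycle a y ∧ y ≠ a) := by
  rcases H.vertex_glued h with h | ⟨hx', hy'⟩ | ⟨hx', hy'⟩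
  · exact absurd ((H.mem_iff_of_vertex h).1 hx) hy
  · exact .inl ⟨hx'.resolve_left (H.ne_a hx),
      hy'.resolve_right fun h => hy ((H.mem_iff_of_vertex h).1 H.b_mem)⟩
  · exact .inr ⟨hx'.resolve_left fun h => H.a_notMem ((H.mem_iff_of_vertex h.2).2 hx),
      (hy'.resolve_right fun h => hy ((H.mem_iff_of_vertex h).1 H.c_mem)).symm⟩

theorem exists_pow_of_rootFace (h : RootFace σ α a b j x) (hx : S x) :
    ∃ k, j ≤ k ∧ k < cycleLength (σ * α) b ∧ ((σ * α) ^ k) b = x :=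
  h.resolve_left fun h => H.a_notMem ((H.mem_iff_of_face h).2 hx)

theorem exists_pow_of_oppositeFace (h : OppositeFace σ α a b j x) (hx : S x) :
    ∃ k < j, ((σ * α) ^ k) b = x :=
  h.resolve_left fun h => H.apply_a_notMem ((H.mem_iff_of_face h).2 hx)

theorem face_a_of_rootFace (h : RootFace σ α a b j x) (hx : ¬ S x) : (σ * α).SameCycle a x :=
  h.resolve_right fun ⟨k, _, _, hk⟩ => hx (hk ▸ H.pow_b_mem k)

theorem face_apply_a_of_oppositeFace (h : OppositeFace σ α a b j x) (hx : ¬ S x) :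
    (σ * α).SameCycle (σ a) x :=
  h.resolve_right fun ⟨k, _, hk⟩ => hx (hk ▸ H.pow_b_mem k)

theorem face_of_face_glued (h : (glued σ a b c * α).SameCycle x y) (hS : S x ↔ S y) :
    (σ * α).SameCycle x y := by
  rcases H.face_glued h with h | ⟨hx, hy⟩ | ⟨hx, hy⟩
  · exact h
  · by_cases hxS : S x
    · obtain ⟨k, -, -, rfl⟩ := H.exists_pow_of_rootFace hx hxS
      obtain ⟨l, -, -, rfl⟩ := H.exists_pow_of_rootFace hy (hS.1 hxS)
      exact (sameCycle_self_pow _ b k).symm.trans (sameCycle_self_pow _ b l)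
    · exact (H.face_a_of_rootFace hx hxS).symm.trans
        (H.face_a_of_rootFace hy fun h => hxS (hS.2 h))
  · by_cases hxS : S x
    · obtain ⟨k, -, rfl⟩ := H.exists_pow_of_oppositeFace hx hxS
      obtain ⟨l, -, rfl⟩ := H.exists_pow_of_oppositeFace hy (hS.1 hxS)
      exact (sameCycle_self_pow _ b k).symm.trans (sameCycle_self_pow _ b l)
    · exact (H.face_apply_a_of_oppositeFace hx hxS).symm.trans
        (H.face_apply_a_of_oppositeFace hy fun h => hxS (hS.2 h))

theorem face_glued_crossing (h : (glued σ a b c * α).SameCycle x y) (hx : S x) (hy : ¬ S y) :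
    (RootFace σ α a b j x ∧ (σ * α).SameCycle a y) ∨
      (OppositeFace σ α a b j x ∧ (σ * α).SameCycle (σ a) y) := by
  rcases H.face_glued h with h | ⟨hx', hy'⟩ | ⟨hx', hy'⟩
  · exact absurd ((H.mem_iff_of_face h).1 hx) hy
  · exact .inl ⟨hx', H.face_a_of_rootFace hy' hy⟩
  · exact .inr ⟨hx', H.face_apply_a_of_oppositeFace hy' hy⟩

theorem not_face_glued_of_vertex_glued (hv : (glued σ a b c).SameCycle x y) (hx : S x)
    (hy : ¬ S y) : ¬ (glued σ a b c * α).SameCycle x y := fun hf => by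
  have hlt := H.lt_cycleLength
  have hpos := H.pos
  rcases H.vertex_glued_crossing hv hx hy with ⟨hbx, rfl⟩ | ⟨hcx, hay, hya⟩ <;>
    rcases H.face_glued_crossing hf hx hy with ⟨hx', hy'⟩ | ⟨hx', hy'⟩
  · obtain ⟨k, hj, hk, rfl⟩ := H.exists_pow_of_rootFace hx' hx
    exact H.not_vertex_b_pow_b (by omega) hk hbx
  · exact H.not_face_a_apply_a hy'.symm
  · exact hya (H.nonseparable _ _ hay hy').symm
  · obtain ⟨k, hj, rfl⟩ := H.exists_pow_of_oppositeFace hx' hx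
    exact H.not_vertex_c_pow_b (by omega) hj.ne hcx

theorem nonseparable_glued : Nonseparable (glued σ a b c) α := by
  intro x y hv hf
  by_cases hS : S x ↔ S y
  · exact H.nonseparable _ _ (H.vertex_of_vertex_glued hv hS) (H.face_of_face_glued hf hS)
  · by_cases hx : S x
    · exact absurd hf (H.not_face_glued_of_vertex_glued hv hx fun hy => hS (iff_of_true hx hy))
    · exact absurd hf.symm (H.not_face_glued_of_vertex_glued hv.symm
        (by_contra fun hy => hS (iff_of_false hx hy)) hx)

theorem componentSetoid_glued_glue (x : D) :
    componentSetoid (glued σ a b c) α x (glue a b c (σ a) x) := by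
  let r := componentSetoid (glued σ a b c) α
  have hac : r a c := r.symm (componentSetoid_of_sameCycle_mul H.face_glued_c_a)
  have hab : r a b := H.glued_a ▸ componentSetoid_left (glued σ a b c) α a
  exact rel_glue_apply hab hac (r.trans hac
    ((le_sup_left : SameCycle.setoid (glued σ a b c) ≤ r) H.vertex_glued_c_apply_a)) x

theorem isConnectedMap_glued : IsConnectedMap (glued σ a b c) α := by
  let r := componentSetoid (glued σ a b c) α
  have hle : componentSetoid σ α ≤ r := componentSetoid_le
    (fun x => r.trans (componentSetoid_left (glued σ a b c) α x)
      (r.symm (H.componentSetoid_glued_glue (σ x))))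
    (componentSetoid_right _ _)
  have hab : r a b := H.glued_a ▸ componentSetoid_left (glued σ a b c) α a
  have hroot (x : D) : r x a := by
    by_cases hx : S x
    · exact r.trans (hle (H.componentSetoid_of_iff x b (iff_of_true hx H.b_mem))) (r.symm hab)
    · exact hle (H.componentSetoid_of_iff x a (iff_of_false hx H.a_notMem))
  exact fun x y => r.trans (hroot x) (r.symm (hroot y))

theorem isNonseparableMap_glued : IsNonseparableMap (glued σ a b c) α :=
  ⟨H.isConnectedMap_glued, H.euler_glued, H.nonseparable_glued⟩

theorem not_meetsFaceAt_of_lt {k : ℕ} (hpos : 0 < k) (hk : k < j) :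
    ¬ MeetsFaceAt (glued σ a b c) α a b k := by
  rintro ⟨x, hv, hf⟩
  have hlt := H.lt_cycleLength
  have hroot : RootFace σ α a b j x :=
    (iff_of_sameCycle (p := RootFace σ α a b j) (fun _ => H.rootFace_glued) hf).2 (.inl .rfl)
  have hS := H.pow_b_mem k
  rw [H.glued_pow_b hk] at hv
  by_cases hx : S x
  · obtain ⟨l, hj, hl, rfl⟩ := H.exists_pow_of_rootFace hroot hx
    have := pow_apply_inj_of_lt (hk.trans hlt) hl (H.nonseparable _ _
      (H.vertex_of_vertex_glued hv.symm (iff_of_true hS hx))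
      ((sameCycle_self_pow _ b k).symm.trans (sameCycle_self_pow _ b l)))
    omega
  · rcases H.vertex_glued_crossing hv.symm hS hx with ⟨h, -⟩ | ⟨h, -⟩
    · exact H.not_vertex_b_pow_b hpos (hk.trans hlt) h
    · exact H.not_vertex_c_pow_b (hk.trans hlt) hk.ne h

theorem isLeast_meetsFaceAt : IsLeast {k | 0 < k ∧ MeetsFaceAt (glued σ a b c) α a b k} j :=
  ⟨⟨H.pos, c, H.glued_pow_j_b.symm ▸ H.vertex_glued_c_apply_a, H.face_glued_c_a⟩,
    fun _ hk => not_lt.1 fun hlt => H.not_meetsFaceAt_of_lt hk.1 hlt hk.2⟩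

end SeriesPair

end Series

section Uniqueness

open Function (Semiconj)

variable {D D' : Type*} [Finite D] {σ α : Perm D} {σ' α' : Perm D'}

theorem MeetsFaceAt.map {e : D ≃ D'} (hσ : Semiconj e σ σ') (hα : Semiconj e α α') {a b : D}
    {k : ℕ} (h : MeetsFaceAt σ α a b k) : MeetsFaceAt σ' α' (e a) (e b) k := by
  obtain ⟨x, hv, hf⟩ := h
  refine ⟨e x, ?_, sameCycle_map (semiconj_mul hσ hα) hf⟩
  rw [← semiconj_pow (semiconj_mul hσ hα)]
  exact sameCycle_map hσ hv

theorem meetsFaceAt_map_iff [Finite D'] {e : D ≃ D'} (hσ : Semiconj e σ σ')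
    (hα : Semiconj e α α') {a b : D} {k : ℕ} :
    MeetsFaceAt σ' α' (e a) (e b) k ↔ MeetsFaceAt σ α a b k :=
  ⟨fun h => by simpa using h.map (semiconj_symm hσ) (semiconj_symm hα), fun h => h.map hσ hα⟩

namespace SeriesPair

variable [Finite D'] {S : D → Prop} {a b c : D} {j : ℕ} {S' : D' → Prop} {b' c' : D'}
  {j' : ℕ} {e : D ≃ D'}

theorem map_b (H : SeriesPair σ α S a b c j) (H' : SeriesPair σ' α' S' (e a) b' c' j')
    (hσ : Semiconj e (glued σ a b c) (glued σ' (e a) b' c')) : e b = b' := by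
  rw [← H.glued_a, hσ, H'.glued_a]

theorem index_eq (H : SeriesPair σ α S a b c j) (H' : SeriesPair σ' α' S' (e a) b' c' j')
    (hσ : Semiconj e (glued σ a b c) (glued σ' (e a) b' c')) (hα : Semiconj e α α') : j = j' := by
  obtain rfl := H.map_b H' hσ
  have h := H'.isLeast_meetsFaceAt
  simp only [meetsFaceAt_map_iff hσ hα] at h
  exact H.isLeast_meetsFaceAt.unique h

theorem map_apply_a (H : SeriesPair σ α S a b c j) (H' : SeriesPair σ' α' S' (e a) b' c' j')
    (hσ : Semiconj e (glued σ a b c) (glued σ' (e a) b' c')) (hα : Semiconj e α α') :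
    e (σ a) = σ' (e a) := by
  rw [← H.glued_pow_j_b, semiconj_pow (semiconj_mul hσ hα), H.map_b H' hσ, H.index_eq H' hσ hα,
    H'.glued_pow_j_b]

theorem map_c (H : SeriesPair σ α S a b c j) (H' : SeriesPair σ' α' S' (e a) b' c' j')
    (hσ : Semiconj e (glued σ a b c) (glued σ' (e a) b' c')) (hα : Semiconj e α α') :
    e c = c' := by
  have hv := sameCycle_map hσ H.vertex_glued_c_apply_a
  rw [H.map_apply_a H' hσ hα] at hv
  exact H'.nonseparable_glued _ _ (hv.trans H'.vertex_glued_c_apply_a.symm)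
    ((sameCycle_map (semiconj_mul hσ hα) H.face_glued_c_a).trans H'.face_glued_c_a.symm)

theorem semiconj_of_semiconj_glued (H : SeriesPair σ α S a b c j)
    (H' : SeriesPair σ' α' S' (e a) b' c' j')
    (hσ : Semiconj e (glued σ a b c) (glued σ' (e a) b' c')) (hα : Semiconj e α α') :
    Semiconj e σ σ' := fun x => by
  have h := hσ x
  rw [glued, glued, Perm.mul_apply, Perm.mul_apply, map_glue, H.map_apply_a H' hσ hα,
    H.map_b H' hσ, H.map_c H' hσ hα] at h
  exact (glue (e a) b' c' (σ' (e a))).injective h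

theorem map_mem_iff (H : SeriesPair σ α S a b c j) (H' : SeriesPair σ' α' S' (e a) b' c' j')
    (hσ : Semiconj e (glued σ a b c) (glued σ' (e a) b' c')) (hα : Semiconj e α α') (x : D) :
    S' (e x) ↔ S x := by
  have hσ' := H.semiconj_of_semiconj_glued H' hσ hα
  have key {y z} : componentSetoid σ α y z → (S' (e y) ↔ S' (e z)) :=
    iff_of_componentSetoid (p := fun z => S' (e z))
      (fun z hz => by rw [hσ']; exact H'.vertex_mem _ hz)
      (fun z hz => by rw [hα]; exact H'.edge_mem _ hz)
  by_cases hx : S x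
  · refine iff_of_true ((key (H.componentSetoid_of_iff x b (iff_of_true hx H.b_mem))).2 ?_) hx
    exact H.map_b H' hσ ▸ H'.b_mem
  · exact iff_of_false
      ((key (H.componentSetoid_of_iff x a (iff_of_false hx H.a_notMem))).not.2 H'.a_notMem) hx

end SeriesPair

end Uniqueness

section Cutting

variable {D : Type*}

/-- The inverse of `glued`: the corner `q` is split off the vertex of `c`. -/
noncomputable def unglued (σ : Perm D) (a b c q : D) : Perm D := (glue a b c q)⁻¹ * σ

theorem glue_mul_unglued (σ : Perm D) (a b c q : D) : glue a b c q * unglued σ a b c q = σ :=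
  mul_inv_cancel_left _ _

section

variable [DecidableEq D]

theorem unglued_eq (σ : Perm D) (a b c q : D) :
    unglued σ a b c q = swap a q * (swap a b * (swap c q * σ)) := by
  simp only [unglued, glue, mul_inv_rev, swap_inv, mul_assoc]
  congr!

theorem unglued_mul_eq {a b c q : D} (σ α : Perm D) (hab : a ≠ b) (hac : a ≠ c) (haq : a ≠ q)
    (hbc : b ≠ c) (hbq : b ≠ q) (hcq : c ≠ q) :
    unglued σ a b c q * α = swap b c * (swap b q * (swap a c * (σ * α))) := by
  have hfactor : swap a q * (swap a b * swap c q) = swap b c * (swap b q * swap a c) := by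
    ext x
    simp only [Perm.mul_apply, swap_apply_def]
    grind
  simp only [unglued_eq, ← mul_assoc] at hfactor ⊢
  rw [hfactor]

end

/-- The data of the first vertex on the way along the face of `b = σ a`, starting at `b`, that is
incident to the face of `a`: it is reached at the corner `q` after `k` steps, and its corner on the
face of `a` is `c`. -/
structure FirstMeeting (σ α : Perm D) (a b c q : D) (k : ℕ) : Prop where
  map : IsNonseparableMap σ α
  apply_a : σ a = b
  b_ne_a : b ≠ a
  lt_cycleLength : k < cycleLength (σ * α) b
  pow_b : ((σ * α) ^ k) b = q
  vertex_c_q : σ.SameCycle c q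
  face_c_a : (σ * α).SameCycle c a
  isLeast : IsLeast {k | 0 < k ∧ MeetsFaceAt σ α a b k} k

namespace FirstMeeting

variable {σ α : Perm D} {a b c q x y : D} {k : ℕ} (H : FirstMeeting σ α a b c q k)

include H

theorem pos : 0 < k := H.isLeast.1.1

theorem vertex_a_b : σ.SameCycle a b := H.apply_a ▸ sameCycle_self_apply σ a

theorem not_face_a_b : ¬ (σ * α).SameCycle a b := fun h =>
  H.b_ne_a (H.map.nonseparable _ _ H.vertex_a_b h).symm

theorem face_b_q : (σ * α).SameCycle b q := H.pow_b ▸ sameCycle_self_pow _ _ _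

theorem ne_of_face (hx : (σ * α).SameCycle b x) (hy : (σ * α).SameCycle y a) : x ≠ y := by
  rintro rfl
  exact H.not_face_a_b (hx.trans hy).symm

theorem b_ne_q : b ≠ q := fun h =>
  pow_apply_ne_self H.pos H.lt_cycleLength (H.pow_b.trans h.symm)

theorem q_ne_a : q ≠ a := H.ne_of_face H.face_b_q .rfl

theorem q_ne_c : q ≠ c := H.ne_of_face H.face_b_q H.face_c_a

theorem b_ne_c : b ≠ c := H.ne_of_face .rfl H.face_c_a

theorem a_ne_c : a ≠ c := by
  rintro rfl
  exact H.b_ne_q (H.map.nonseparable _ _ (H.vertex_a_b.symm.trans H.vertex_c_q) H.face_b_q)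

theorem unglued_a : unglued σ a b c q a = q := by
  classical
  rw [unglued_eq, Perm.mul_apply, Perm.mul_apply, Perm.mul_apply, H.apply_a,
    swap_apply_of_ne_of_ne H.b_ne_c H.b_ne_q, swap_apply_right, swap_apply_left]

theorem unglued_apply_ne : unglued σ a b c q a ≠ a := H.unglued_a.symm ▸ H.q_ne_a

section

variable [DecidableEq D]

theorem eq_of_sameCycle_a (h : (swap a b * (swap c q * σ)).SameCycle x a) : x = a := by
  refine h.eq_of_right (Perm.mul_apply _ _ _ |>.trans ?_)
  rw [Perm.mul_apply, H.apply_a, swap_apply_of_ne_of_ne H.b_ne_c H.b_ne_q, swap_apply_right]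

theorem sameCycle_a_b : (swap c q * σ).SameCycle a b := by
  have h := sameCycle_self_apply (swap c q * σ) a
  rwa [Perm.mul_apply, H.apply_a, swap_apply_of_ne_of_ne H.b_ne_c H.b_ne_q] at h

theorem unglued_mul :
    unglued σ a b c q * α = swap b c * (swap b q * (swap a c * (σ * α))) :=
  unglued_mul_eq σ α H.b_ne_a.symm H.a_ne_c H.q_ne_a.symm H.b_ne_c H.b_ne_q H.q_ne_c.symm

variable [Finite D]

theorem setoid_unmerged_le :
    SameCycle.setoid (swap a b * (swap c q * σ)) ≤ SameCycle.setoid σ :=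
  (setoid_swap_mul_le_of_sameCycle H.sameCycle_a_b).trans
    (setoid_swap_mul_le_of_sameCycle H.vertex_c_q)

theorem sameCycle_b_q : (swap a c * (σ * α)).SameCycle b q :=
  sameCycle_swap_mul_of_avoid (fun h => H.not_face_a_b h.symm)
    (fun h => H.not_face_a_b (h.trans H.face_c_a).symm) H.face_b_q

theorem setoid_face_unmerged_le :
    SameCycle.setoid (swap b q * (swap a c * (σ * α))) ≤ SameCycle.setoid (σ * α) :=
  (setoid_swap_mul_le_of_sameCycle H.sameCycle_b_q).trans
    (setoid_swap_mul_le_of_sameCycle H.face_c_a.symm)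

theorem not_sameCycle_b_c : ¬ (swap b q * (swap a c * (σ * α))).SameCycle b c := fun h =>
  H.not_face_a_b (SameCycle.trans (H.setoid_face_unmerged_le h) H.face_c_a).symm

theorem exists_pow_of_sameCycle_b (h : (swap b q * (swap a c * (σ * α))).SameCycle b x) :
    ∃ l < k, ((σ * α) ^ l) b = x := by
  refine sameCycle_induction (p := fun x => ∃ l < k, ((σ * α) ^ l) b = x) ?_ h ⟨0, H.pos, rfl⟩
  rintro _ ⟨l, hl, rfl⟩
  have hk := H.lt_cycleLength
  have hs := sameCycle_self_pow (σ * α) b (l + 1)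
  rw [Perm.mul_apply, Perm.mul_apply, ← pow_succ_apply_left,
    swap_apply_of_ne_of_ne (H.ne_of_face hs .rfl) (H.ne_of_face hs H.face_c_a)]
  rcases eq_or_ne (l + 1) k with rfl | hlast
  · exact ⟨0, H.pos, by rw [H.pow_b, swap_apply_right]; rfl⟩
  · refine ⟨l + 1, by omega, (swap_apply_of_ne_of_ne ?_ fun h => ?_).symm⟩
    · exact pow_apply_ne_self l.succ_pos (by omega)
    · exact hlast (pow_apply_inj_of_lt (by omega) hk (h.trans H.pow_b.symm))

end

theorem glued_unglued : glued (unglued σ a b c q) a b c = σ := by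
  rw [glued, H.unglued_a, glue_mul_unglued]

theorem not_face_of_vertex {l : ℕ} (hl : l < k) (hv : σ.SameCycle (((σ * α) ^ l) b) y)
    (hne : ¬ (((σ * α) ^ l) b = b ∧ y = a)) : ¬ (σ * α).SameCycle y a := fun hf => by
  rcases l.eq_zero_or_pos with rfl | hl0
  · exact hne ⟨rfl, H.map.nonseparable _ _ (hv.symm.trans H.vertex_a_b.symm) hf⟩
  · exact not_lt.2 (H.isLeast.2 ⟨hl0, y, hv.symm, hf⟩) hl

variable [Finite D]

theorem face_unglued_b_c : (unglued σ a b c q * α).SameCycle b c := by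
  classical
  rw [H.unglued_mul]
  exact sameCycle_swap_mul_of_not_sameCycle H.not_sameCycle_b_c

theorem cycleCount_unglued : cycleCount (unglued σ a b c q) = cycleCount σ + 1 := by
  classical
  have := cycleCount_swap_mul_of_sameCycle H.q_ne_c.symm H.vertex_c_q
  have := cycleCount_swap_mul_of_sameCycle H.b_ne_a.symm H.sameCycle_a_b
  have := cycleCount_swap_mul_of_not_sameCycle (g := swap a b * (swap c q * σ)) (u := a) (v := q)
    fun h => H.q_ne_a (H.eq_of_sameCycle_a h.symm)
  rw [unglued_eq]
  omega

theorem cycleCount_unglued_mul : cycleCount (unglued σ a b c q * α) = cycleCount (σ * α) + 1 := by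
  classical
  have := cycleCount_swap_mul_of_sameCycle H.a_ne_c H.face_c_a.symm
  have := cycleCount_swap_mul_of_sameCycle H.b_ne_q H.sameCycle_b_q
  have := cycleCount_swap_mul_of_not_sameCycle H.not_sameCycle_b_c
  rw [H.unglued_mul]
  omega

theorem vertex_unglued (h : (unglued σ a b c q).SameCycle x y) :
    σ.SameCycle x y ∨ (x = a ∧ σ.SameCycle q y) ∨ (σ.SameCycle q x ∧ y = a) := by
  classical
  rw [unglued_eq] at h
  rcases mergeSetoid_iff.1 (setoid_swap_mul_le_mergeSetoid h) with h | ⟨hx, hy⟩ | ⟨hx, hy⟩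
  · exact .inl (H.setoid_unmerged_le h)
  · exact .inr (.inl ⟨H.eq_of_sameCycle_a hx, SameCycle.symm (H.setoid_unmerged_le hy)⟩)
  · exact .inr (.inr ⟨SameCycle.symm (H.setoid_unmerged_le hx), H.eq_of_sameCycle_a hy⟩)

theorem face_unglued (h : (unglued σ a b c q * α).SameCycle x y) : (σ * α).SameCycle x y ∨
    ((∃ l < k, ((σ * α) ^ l) b = x) ∧ (σ * α).SameCycle y a) ∨
      ((σ * α).SameCycle x a ∧ ∃ l < k, ((σ * α) ^ l) b = y) := by
  classical
  rw [H.unglued_mul] at h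
  rcases mergeSetoid_iff.1 (setoid_swap_mul_le_mergeSetoid h) with h | ⟨hx, hy⟩ | ⟨hx, hy⟩
  · exact .inl (H.setoid_face_unmerged_le h)
  · exact .inr (.inl ⟨H.exists_pow_of_sameCycle_b (SameCycle.symm hx),
      SameCycle.trans (H.setoid_face_unmerged_le hy) H.face_c_a⟩)
  · exact .inr (.inr ⟨SameCycle.trans (H.setoid_face_unmerged_le hx) H.face_c_a,
      H.exists_pow_of_sameCycle_b (SameCycle.symm hy)⟩)

theorem componentSetoid_merge (x y : D) :
    mergeSetoid (componentSetoid (unglued σ a b c q) α) a b x y := by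
  let r := mergeSetoid (componentSetoid (unglued σ a b c q) α) a b
  have hle : componentSetoid (unglued σ a b c q) α ≤ r := le_mergeSetoid
  have hab : r a b := mergeSetoid_rel
  have hac : r a c := r.trans hab (hle (componentSetoid_of_sameCycle_mul H.face_unglued_b_c))
  have haq : r a q := H.unglued_a ▸ hle (componentSetoid_left (unglued σ a b c q) α a)
  refine componentSetoid_le (r := r) (fun z => ?_)
    (fun z => hle (componentSetoid_right _ _ z)) (H.map.connected x y)
  have hz := rel_glue_apply hab hac haq (unglued σ a b c q z)
  rw [← Perm.mul_apply, glue_mul_unglued] at hz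
  exact r.trans (hle (componentSetoid_left _ α z)) hz

-- Otherwise the cut map would be connected, with more vertices and faces than planarity allows.
theorem not_componentSetoid_a_b : ¬ componentSetoid (unglued σ a b c q) α a b := fun h => by
  have hconn : IsConnectedMap (unglued σ a b c q) α := fun x y =>
    mergeSetoid_eq_self h ▸ H.componentSetoid_merge x y
  have := hconn.euler_char_le_two
  have := H.map.euler
  have := H.cycleCount_unglued
  have := H.cycleCount_unglued_mul
  omega

theorem not_face_unglued_a (hq : σ.SameCycle q y) (hc : y ≠ c) :
    ¬ (unglued σ a b c q * α).SameCycle a y := fun hf => by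
  rcases H.face_unglued hf with h | ⟨⟨l, -, h⟩, -⟩ | ⟨-, l, hl, rfl⟩
  · exact hc (H.map.nonseparable _ _ (H.vertex_c_q.trans hq) (H.face_c_a.trans h)).symm
  · exact H.not_face_a_b (h ▸ (sameCycle_self_pow (σ * α) b l)).symm
  · have h := H.map.nonseparable _ _ hq (H.face_b_q.symm.trans (sameCycle_self_pow _ b l))
    exact hl.ne (pow_apply_inj_of_lt (hl.trans H.lt_cycleLength) H.lt_cycleLength
      (h.symm.trans H.pow_b.symm))

theorem nonseparable_unglued : Nonseparable (unglued σ a b c q) α := by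
  intro x y hv hf
  let r := componentSetoid (unglued σ a b c q) α
  have hxy : r x y := componentSetoid_of_sameCycle_mul hf
  have hbc : r b c := componentSetoid_of_sameCycle_mul H.face_unglued_b_c
  have hab : ¬ r a b := H.not_componentSetoid_a_b
  rcases H.vertex_unglued hv with h | ⟨rfl, h⟩ | ⟨h, rfl⟩
  · rcases H.face_unglued hf with h' | ⟨⟨l, hl, rfl⟩, hy⟩ | ⟨hx, l, hl, rfl⟩
    · exact H.map.nonseparable _ _ h h'
    · exact absurd hy (H.not_face_of_vertex hl h fun ⟨hb, ha⟩ => hab (r.symm (ha ▸ hb ▸ hxy)))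
    · exact absurd hx (H.not_face_of_vertex hl h.symm fun ⟨hb, ha⟩ => hab (ha ▸ hb ▸ hxy))
  · refine absurd hf (H.not_face_unglued_a h ?_)
    rintro rfl
    exact hab (r.trans hxy (r.symm hbc))
  · refine absurd hf.symm (H.not_face_unglued_a h ?_)
    rintro rfl
    exact hab (r.trans (r.symm hxy) (r.symm hbc))

theorem exists_seriesPair :
    ∃ j, SeriesPair (unglued σ a b c q) α (componentSetoid (unglued σ a b c q) α b) a b c j := by
  let r := componentSetoid (unglued σ a b c q) α
  obtain ⟨j, hj, hjc⟩ := exists_lt_cycleLength_of_sameCycle H.face_unglued_b_c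
  refine ⟨j, fun x hx => r.trans hx (componentSetoid_left _ _ x),
    fun x hx => r.trans hx (componentSetoid_right _ _ x), r.refl b,
    fun h => H.not_componentSetoid_a_b (r.symm h), H.unglued_apply_ne,
    Nat.pos_of_ne_zero ?_, hj, hjc, H.nonseparable_unglued, fun x y hxy => ?_, ?_⟩
  · rintro rfl
    exact H.b_ne_c hjc
  · rcases mergeSetoid_iff.1 (H.componentSetoid_merge x y) with h | ⟨-, hy⟩ | ⟨hx, -⟩
    · exact h
    · exact r.trans (r.symm (hxy.2 (r.symm hy))) (r.symm hy)
    · exact r.trans hx (hxy.1 (r.symm hx))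
  · have := H.map.euler
    have := H.cycleCount_unglued
    have := H.cycleCount_unglued_mul
    omega

end FirstMeeting

variable [Finite D] {σ α : Perm D} {a : D}

theorem IsNonseparableMap.exists_firstMeeting (h : IsNonseparableMap σ α)
    (hinv : ∀ x, α (α x) = x) (hloop : σ a ≠ a) (hlink : σ a ≠ α a) :
    ∃ c q k, FirstMeeting σ α a (σ a) c q k := by
  have hface : (σ * α).SameCycle (σ a) (α a) :=
    SameCycle.symm ⟨1, by rw [zpow_one, Perm.mul_apply, hinv]⟩
  obtain ⟨m, hm, hma⟩ := exists_lt_cycleLength_of_sameCycle hface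
  have hpos : 0 < m := Nat.pos_of_ne_zero (by rintro rfl; exact hlink hma)
  have hmeets : MeetsFaceAt σ α a (σ a) m :=
    ⟨(σ * α) a, hma ▸ (sameCycle_self_apply σ (α a)).symm, (sameCycle_self_apply _ a).symm⟩
  have hleast := isLeast_csInf
    (⟨m, hpos, hmeets⟩ : {k | 0 < k ∧ MeetsFaceAt σ α a (σ a) k}.Nonempty)
  obtain ⟨c, hv, hf⟩ := hleast.1.2
  exact ⟨c, _, _, h, rfl, hloop, (hleast.2 ⟨hpos, hmeets⟩).trans_lt hm, rfl, hv, hf, hleast⟩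

theorem IsNonseparableMap.exists_seriesPair (h : IsNonseparableMap σ α)
    (hinv : ∀ x, α (α x) = x) (hloop : σ a ≠ a) (hlink : σ a ≠ α a) :
    ∃ τ S c j, SeriesPair τ α S a (σ a) c j ∧ glued τ a (σ a) c = σ := by
  obtain ⟨c, q, k, H⟩ := h.exists_firstMeeting hinv hloop hlink
  obtain ⟨j, hj⟩ := H.exists_seriesPair
  exact ⟨_, _, c, j, hj, H.glued_unglued⟩

end Cutting

section Sum

open Function (Semiconj)

variable {D D' : Type*}

theorem cycleCount_map [Finite D] [Finite D'] {f : Perm D} {f' : Perm D'} (e : D ≃ D')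
    (h : Semiconj e f f') : cycleCount f = cycleCount f' :=
  Nat.card_congr <| Quotient.congr e fun x y =>
    ⟨fun hxy => sameCycle_map h hxy, fun hxy => show f.SameCycle x y by
      simpa only [symm_apply_apply] using sameCycle_map (semiconj_symm h) hxy⟩

theorem sumCongr_zpow (f : Perm D) (g : Perm D') (i : ℤ) :
    Perm.sumCongr f g ^ i = Perm.sumCongr (f ^ i) (g ^ i) :=
  (map_zpow (sumCongrHom D D') (f, g) i).symm

theorem sumCongr_pow (f : Perm D) (g : Perm D') (n : ℕ) :
    Perm.sumCongr f g ^ n = Perm.sumCongr (f ^ n) (g ^ n) :=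
  (map_pow (sumCongrHom D D') (f, g) n).symm

theorem sameCycle_inl {f : Perm D} {g : Perm D'} {x y : D} :
    (Perm.sumCongr f g).SameCycle (Sum.inl x) (Sum.inl y) ↔ f.SameCycle x y := by
  simp only [SameCycle, sumCongr_zpow, Perm.sumCongr_apply, Sum.map_inl, Sum.inl.injEq]

theorem sameCycle_inr {f : Perm D} {g : Perm D'} {x y : D'} :
    (Perm.sumCongr f g).SameCycle (Sum.inr x) (Sum.inr y) ↔ g.SameCycle x y := by
  simp only [SameCycle, sumCongr_zpow, Perm.sumCongr_apply, Sum.map_inr, Sum.inr.injEq]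

theorem not_sameCycle_inl_inr {f : Perm D} {g : Perm D'} {x : D} {y : D'} :
    ¬ (Perm.sumCongr f g).SameCycle (Sum.inl x) (Sum.inr y) := by
  simp only [SameCycle, sumCongr_zpow, Perm.sumCongr_apply, Sum.map_inl, reduceCtorEq,
    exists_false, not_false_eq_true]

theorem cycleCount_sumCongr [Finite D] [Finite D'] (f : Perm D) (g : Perm D') :
    cycleCount (Perm.sumCongr f g) = cycleCount f + cycleCount g := by
  rw [cycleCount, cycleCount, cycleCount, ← Nat.card_sum]
  refine (Nat.card_eq_of_bijective
    (Sum.elim (Quotient.map' Sum.inl fun _ _ => sameCycle_inl.2)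
      (Quotient.map' Sum.inr fun _ _ => sameCycle_inr.2)) ⟨?_, ?_⟩).symm
  · rintro (⟨⟨x⟩⟩ | ⟨⟨x⟩⟩) (⟨⟨y⟩⟩ | ⟨⟨y⟩⟩) h
    · exact congrArg Sum.inl (Quotient.sound (sameCycle_inl.1 (Quotient.exact h)))
    · exact absurd (Quotient.exact h) not_sameCycle_inl_inr
    · exact absurd (Quotient.exact h).symm not_sameCycle_inl_inr
    · exact congrArg Sum.inr (Quotient.sound (sameCycle_inr.1 (Quotient.exact h)))
  · rintro ⟨x | x⟩
    exacts [⟨Sum.inl (Quotient.mk _ x), rfl⟩, ⟨Sum.inr (Quotient.mk _ x), rfl⟩]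

theorem cycleLength_inl (f : Perm D) (g : Perm D') (x : D) :
    cycleLength (Perm.sumCongr f g) (Sum.inl x) = cycleLength f x :=
  Function.minimalPeriod_eq_minimalPeriod_iff.2 fun n => by
    simp only [Function.IsPeriodicPt, Function.IsFixedPt, iterate_eq_pow, sumCongr_pow,
      Perm.sumCongr_apply, Sum.map_inl, Sum.inl.injEq]

theorem cycleLength_inr (f : Perm D) (g : Perm D') (x : D') :
    cycleLength (Perm.sumCongr f g) (Sum.inr x) = cycleLength g x :=
  Function.minimalPeriod_eq_minimalPeriod_iff.2 fun n => by
    simp only [Function.IsPeriodicPt, Function.IsFixedPt, iterate_eq_pow, sumCongr_pow,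
      Perm.sumCongr_apply, Sum.map_inr, Sum.inr.injEq]

theorem nonseparable_sumCongr {σ α : Perm D} {σ' α' : Perm D'} (h : Nonseparable σ α)
    (h' : Nonseparable σ' α') : Nonseparable (Perm.sumCongr σ σ') (Perm.sumCongr α α') := by
  rw [Nonseparable, Perm.sumCongr_mul]
  rintro (x | x) (y | y) hv hf
  · exact congrArg Sum.inl (h _ _ (sameCycle_inl.1 hv) (sameCycle_inl.1 hf))
  · exact absurd hv not_sameCycle_inl_inr
  · exact absurd hv.symm not_sameCycle_inl_inr
  · exact congrArg Sum.inr (h' _ _ (sameCycle_inr.1 hv) (sameCycle_inr.1 hf))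

theorem seriesPair_sumCongr [Finite D] [Finite D'] {σ α : Perm D} {σ' α' : Perm D'}
    (h : IsNonseparableMap σ α) (h' : IsNonseparableMap σ' α') {a : D'} {b : D} {j : ℕ}
    (ha : σ' a ≠ a) (hpos : 0 < j) (hj : j < cycleLength (σ * α) b) :
    SeriesPair (Perm.sumCongr σ σ') (Perm.sumCongr α α') (fun x => x.isLeft = true) (Sum.inr a)
      (Sum.inl b) (Sum.inl (((σ * α) ^ j) b)) j where
  vertex_mem := by rintro (x | x) h; exacts [h, h]
  edge_mem := by rintro (x | x) h; exacts [h, h]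
  b_mem := rfl
  a_notMem := by rw [Sum.isLeft_inr]; exact Bool.false_ne_true
  apply_a_ne h := ha (Sum.inr_injective h)
  pos := hpos
  lt_cycleLength := by rwa [Perm.sumCongr_mul, cycleLength_inl]
  pow_b := by rw [Perm.sumCongr_mul, sumCongr_pow]; rfl
  nonseparable := nonseparable_sumCongr h.nonseparable h'.nonseparable
  componentSetoid_of_iff := by
    let r := componentSetoid (Perm.sumCongr σ σ') (Perm.sumCongr α α')
    rintro (x | x) (y | y) hxy
    · exact (iff_of_componentSetoid (p := fun z => r (Sum.inl x) (Sum.inl z))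
        (fun z hz => r.trans hz (componentSetoid_left _ _ (Sum.inl z)))
        (fun z hz => r.trans hz (componentSetoid_right _ _ (Sum.inl z)))
        (h.connected x y)).1 (r.refl _)
    · simp at hxy
    · simp at hxy
    · exact (iff_of_componentSetoid (p := fun z => r (Sum.inr x) (Sum.inr z))
        (fun z hz => r.trans hz (componentSetoid_left _ _ (Sum.inr z)))
        (fun z hz => r.trans hz (componentSetoid_right _ _ (Sum.inr z)))
        (h'.connected x y)).1 (r.refl _)
  euler := by
    have := h.euler
    have := h'.euler
    rw [Perm.sumCongr_mul, cycleCount_sumCongr, cycleCount_sumCongr, cycleCount_sumCongr,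
      Nat.card_sum]
    omega

theorem exists_eq_sumCongr {A A' B B' : Type*} (e : A ⊕ B ≃ A' ⊕ B')
    (h : ∀ x, (e x).isLeft = true ↔ x.isLeft = true) :
    ∃ (f : A ≃ A') (g : B ≃ B'), e = Equiv.sumCongr f g := by
  have hl (x : A) : ∃ y, e (Sum.inl x) = Sum.inl y := Sum.isLeft_iff.1 ((h _).2 rfl)
  have hr (x : B) : ∃ y, e (Sum.inr x) = Sum.inr y :=
    Sum.isRight_iff.1 (Sum.not_isLeft.1 (mt (h _).1 (by simp)))
  choose f hf using hl
  choose g hg using hr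
  have hfg : ⇑e = Sum.map f g := funext (Sum.rec hf hg)
  have hbij := e.bijective
  rw [hfg, Sum.map_bijective] at hbij
  exact ⟨.ofBijective f hbij.1, .ofBijective g hbij.2, DFunLike.coe_injective hfg⟩

end Sum

section Subtype

variable {D : Type*} {σ α : Perm D} {T : D → Prop}

theorem isConnectedMap_subtypePerm [Finite D] (hσ : ∀ x, T (σ x) ↔ T x)
    (hα : ∀ x, T (α x) ↔ T x) (h : ∀ x y, T x → T y → componentSetoid σ α x y) :
    IsConnectedMap (σ.subtypePerm hσ) (α.subtypePerm hα) := by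
  intro x y
  let r := componentSetoid (σ.subtypePerm hσ) (α.subtypePerm hα)
  obtain ⟨_, hy⟩ := (iff_of_componentSetoid (p := fun z => ∃ hz : T z, r x ⟨z, hz⟩)
    (fun z hz => ⟨(hσ z).2 hz.1, r.trans hz.2 (componentSetoid_left _ _ _)⟩)
    (fun z hz => ⟨(hα z).2 hz.1, r.trans hz.2 (componentSetoid_right _ _ _)⟩)
    (h x y x.2 y.2)).1 ⟨x.2, r.refl x⟩
  exact hy

theorem nonseparable_subtypePerm (hσ : ∀ x, T (σ x) ↔ T x) (hα : ∀ x, T (α x) ↔ T x)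
    (h : Nonseparable σ α) : Nonseparable (σ.subtypePerm hσ) (α.subtypePerm hα) := by
  intro x y hv hf
  rw [subtypePerm_mul] at hf
  exact Subtype.ext (h _ _ (sameCycle_subtypePerm.1 hv) (sameCycle_subtypePerm.1 hf))

theorem cycleCount_eq_add_subtypePerm [Finite D] (f : Perm D) (h : ∀ x, T (f x) ↔ T x)
    (h' : ∀ x, ¬ T (f x) ↔ ¬ T x) :
    cycleCount f = cycleCount (f.subtypePerm h) + cycleCount (f.subtypePerm (p := (¬ T ·)) h') := by
  classical
  rw [← cycleCount_sumCongr]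
  refine (cycleCount_map (Equiv.sumCompl T) ?_).symm
  rintro (x | x) <;> rfl

namespace SeriesPair

variable [Finite D] {S : D → Prop} {a b c : D} {j : ℕ} (H : SeriesPair σ α S a b c j)

include H

theorem vertex_mem_iff (x : D) : S (σ x) ↔ S x := apply_iff_of_forall_imp H.vertex_mem x

theorem edge_mem_iff (x : D) : S (α x) ↔ S x := apply_iff_of_forall_imp H.edge_mem x

theorem vertex_notMem_iff (x : D) : ¬ S (σ x) ↔ ¬ S x := not_congr (H.vertex_mem_iff x)

theorem edge_notMem_iff (x : D) : ¬ S (α x) ↔ ¬ S x := not_congr (H.edge_mem_iff x)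

-- The two characteristics are at most `2` and sum to `4`.
theorem isNonseparableMap_subtypePerm :
    IsNonseparableMap (σ.subtypePerm H.vertex_mem_iff) (α.subtypePerm H.edge_mem_iff) ∧
      IsNonseparableMap (σ.subtypePerm (p := (¬ S ·)) H.vertex_notMem_iff)
        (α.subtypePerm (p := (¬ S ·)) H.edge_notMem_iff) := by
  classical
  have hc := isConnectedMap_subtypePerm H.vertex_mem_iff H.edge_mem_iff
    fun x y hx hy => H.componentSetoid_of_iff x y (iff_of_true hx hy)
  have hc' := isConnectedMap_subtypePerm (T := (¬ S ·)) H.vertex_notMem_iff H.edge_notMem_iff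
    fun x y hx hy => H.componentSetoid_of_iff x y (iff_of_false hx hy)
  have hle := hc.euler_char_le_two
  have hle' := hc'.euler_char_le_two
  have heuler := H.euler
  have hcard := Nat.card_congr (Equiv.sumCompl S)
  rw [cycleCount_eq_add_subtypePerm σ H.vertex_mem_iff H.vertex_notMem_iff,
    cycleCount_eq_add_subtypePerm α H.edge_mem_iff H.edge_notMem_iff,
    cycleCount_eq_add_subtypePerm (σ * α)
      (fun x => (H.vertex_mem_iff _).trans (H.edge_mem_iff x))
      (fun x => (H.vertex_notMem_iff _).trans (H.edge_notMem_iff x)), ← hcard, Nat.card_sum]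
    at heuler
  simp only [subtypePerm_mul] at hle hle'
  refine ⟨⟨hc, ?_, nonseparable_subtypePerm _ _ H.nonseparable⟩,
    ⟨hc', ?_, nonseparable_subtypePerm _ _ H.nonseparable⟩⟩ <;>
  · rw [subtypePerm_mul]
    omega

end SeriesPair

end Subtype

open Function (Semiconj)

/-- Rooted maps on arbitrary finite sets of darts: as in `RMap`, the vertices, edges and faces are
the cycles of `σ`, `α` and `σ * α`, but no condition is imposed on the permutations. -/
structure RootedMap where
  Dart : Type
  [finite : Finite Dart]
  σ : Perm Dart
  α : Perm Dart
  root : Dart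

attribute [instance] RootedMap.finite

namespace RootedMap

/-- The degree of the root face. -/
noncomputable def rootDegree (M : RootedMap) : ℕ := cycleLength (M.σ * M.α) M.root

/-- Rooted nonseparable planar maps. -/
structure IsTwoConnected (M : RootedMap) : Prop where
  inv : ∀ x, M.α (M.α x) = x
  fpf : ∀ x, M.α x ≠ x
  isNonseparableMap : IsNonseparableMap M.σ M.α

/-- Root-preserving isomorphism. -/
def Iso (M M' : RootedMap) : Prop :=
  ∃ e : M.Dart ≃ M'.Dart, Semiconj e M.σ M'.σ ∧ Semiconj e M.α M'.α ∧ e M.root = M'.root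

theorem Iso.symm {M M' : RootedMap} : Iso M M' → Iso M' M := fun ⟨e, hσ, hα, hroot⟩ =>
  ⟨e.symm, semiconj_symm hσ, semiconj_symm hα, by rw [symm_apply_eq, hroot]⟩

theorem Iso.trans {M M' M'' : RootedMap} : Iso M M' → Iso M' M'' → Iso M M'' :=
  fun ⟨e, hσ, hα, hroot⟩ ⟨e', hσ', hα', hroot'⟩ =>
    ⟨e.trans e', hσ'.comp_left hσ, hα'.comp_left hα, by rw [trans_apply, hroot, hroot']⟩

theorem Iso.rootDegree_eq {M M' : RootedMap} : Iso M M' → M.rootDegree = M'.rootDegree :=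
  fun ⟨_, hσ, hα, hroot⟩ => by
    rw [rootDegree, rootDegree, ← hroot, cycleLength_map (semiconj_mul hσ hα)]

theorem Iso.card_eq {M M' : RootedMap} : Iso M M' → Nat.card M.Dart = Nat.card M'.Dart :=
  fun ⟨e, _⟩ => Nat.card_congr e

theorem Iso.apply_root_eq_root_iff {M M' : RootedMap} :
    Iso M M' → (M.σ M.root = M.root ↔ M'.σ M'.root = M'.root) := fun ⟨e, hσ, _, hroot⟩ => by
  rw [← hroot, ← hσ, e.injective.eq_iff]

theorem Iso.apply_root_eq_opposite_iff {M M' : RootedMap} :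
    Iso M M' → (M.σ M.root = M.α M.root ↔ M'.σ M'.root = M'.α M'.root) :=
  fun ⟨e, hσ, hα, hroot⟩ => by
    rw [← hroot, ← hσ, ← hα, e.injective.eq_iff]

theorem Iso.isTwoConnected {M M' : RootedMap} (h : Iso M M') (hM : M.IsTwoConnected) :
    M'.IsTwoConnected := by
  obtain ⟨e, hσ, hα, -⟩ := h
  have hσ' := semiconj_symm hσ
  have hα' := semiconj_symm hα
  have hface := semiconj_mul hσ hα
  refine ⟨fun x => ?_, fun x hx => ?_, fun x y => ?_, ?_, fun x y hv hf => ?_⟩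
  · exact e.symm.injective (by rw [hα', hα', hM.inv])
  · exact hM.fpf (e.symm x) (by rw [← hα', hx])
  · obtain ⟨x, rfl⟩ := e.surjective x
    obtain ⟨y, rfl⟩ := e.surjective y
    let r := componentSetoid M'.σ M'.α
    exact (iff_of_componentSetoid (p := fun z => r (e x) (e z))
      (fun z hz => by rw [hσ]; exact r.trans hz (componentSetoid_left _ _ _))
      (fun z hz => by rw [hα]; exact r.trans hz (componentSetoid_right _ _ _))
      (hM.isNonseparableMap.connected x y)).1 (r.refl _)
  · rw [← cycleCount_map e hσ, ← cycleCount_map e hα, ← cycleCount_map e hface,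
      ← Nat.card_congr e]
    exact hM.isNonseparableMap.euler
  · exact e.symm.injective (hM.isNonseparableMap.nonseparable _ _ (sameCycle_map hσ' hv)
      (sameCycle_map (semiconj_symm hface) hf))

/-- The series insertion of `B` into the root edge of `M`, the end of the root edge of `M` being
attached at the `j`-th corner of the root face of `B`. -/
noncomputable def insert (B : RootedMap) (j : ℕ) (M : RootedMap) : RootedMap where
  Dart := B.Dart ⊕ M.Dart
  σ := glued (Perm.sumCongr B.σ M.σ) (Sum.inr M.root) (Sum.inl B.root)
    (Sum.inl (((B.σ * B.α) ^ j) B.root))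
  α := Perm.sumCongr B.α M.α
  root := Sum.inr M.root

theorem Iso.insert {B B' M M' : RootedMap} (h : Iso B B') (h' : Iso M M') (j : ℕ) :
    Iso (insert B j M) (insert B' j M') := by
  obtain ⟨e, hσ, hα, hroot⟩ := h
  obtain ⟨e', hσ', hα', hroot'⟩ := h'
  have hsum : Semiconj (Equiv.sumCongr e e') (Perm.sumCongr B.σ M.σ) (Perm.sumCongr B'.σ M'.σ) := by
    rintro (x | x)
    exacts [congrArg Sum.inl (hσ x), congrArg Sum.inr (hσ' x)]
  refine ⟨Equiv.sumCongr e e', ?_, ?_, congrArg Sum.inr hroot'⟩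
  · have hpow := semiconj_pow (semiconj_mul hσ hα) j B.root
    rw [hroot] at hpow
    have hglued := semiconj_glued hsum (Sum.inr M.root) (Sum.inl B.root)
      (Sum.inl (((B.σ * B.α) ^ j) B.root))
    simp only [Equiv.sumCongr_apply, Sum.map_inl, Sum.map_inr, hpow, hroot, hroot'] at hglued
    exact hglued
  · rintro (x | x)
    exacts [congrArg Sum.inl (hα x), congrArg Sum.inr (hα' x)]

/-- The conditions under which the series insertion is a nonseparable map: `apply_root_ne` excludes
that the root edge of `M` starts at a vertex of degree one, that is, that `M` is the link. -/
structure CanInsert (B : RootedMap) (j : ℕ) (M : RootedMap) : Prop where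
  block : B.IsTwoConnected
  host : M.IsTwoConnected
  apply_root_ne : M.σ M.root ≠ M.root
  pos : 0 < j
  lt_rootDegree : j < B.rootDegree

namespace CanInsert

variable {B M : RootedMap} {j : ℕ} (h : CanInsert B j M)

include h

theorem seriesPair : SeriesPair (Perm.sumCongr B.σ M.σ) (Perm.sumCongr B.α M.α)
    (fun x => x.isLeft = true) (Sum.inr M.root) (Sum.inl B.root)
    (Sum.inl (((B.σ * B.α) ^ j) B.root)) j :=
  seriesPair_sumCongr h.block.isNonseparableMap h.host.isNonseparableMap h.apply_root_ne h.pos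
    h.lt_rootDegree

theorem isTwoConnected_insert : (insert B j M).IsTwoConnected where
  inv := by
    rintro (x | x)
    exacts [congrArg Sum.inl (h.block.inv x), congrArg Sum.inr (h.host.inv x)]
  fpf := by
    rintro (x | x) hx
    exacts [h.block.fpf x (Sum.inl_injective hx), h.host.fpf x (Sum.inr_injective hx)]
  isNonseparableMap := h.seriesPair.isNonseparableMap_glued

theorem rootDegree_insert :
    (insert B j M).rootDegree = M.rootDegree + (B.rootDegree - j) := by
  have hlen := h.seriesPair.cycleLength_glued
  rwa [Perm.sumCongr_mul, cycleLength_inl, cycleLength_inr] at hlen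

theorem insert_apply_root : (insert B j M).σ (insert B j M).root = Sum.inl B.root :=
  h.seriesPair.glued_a

theorem insert_apply_root_ne : (insert B j M).σ (insert B j M).root ≠ (insert B j M).root :=
  fun hroot => Sum.inl_ne_inr (h.insert_apply_root.symm.trans hroot)

theorem insert_apply_root_ne_opposite :
    (insert B j M).σ (insert B j M).root ≠ (insert B j M).α (insert B j M).root :=
  fun hroot => Sum.inl_ne_inr (h.insert_apply_root.symm.trans hroot)

theorem insert_inj {B' M' : RootedMap} {j' : ℕ} (h' : CanInsert B' j' M')
    (hiso : Iso (insert B j M) (insert B' j' M')) : j = j' ∧ Iso B B' ∧ Iso M M' := by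
  obtain ⟨e, hσ, hα, hroot⟩ := hiso
  have H := h.seriesPair
  have H' := h'.seriesPair
  change e (Sum.inr M.root) = Sum.inr M'.root at hroot
  simp only [RootedMap.insert, ← hroot] at hσ
  rw [← hroot] at H'
  have hb := H.map_b H' hσ
  have hσ' := H.semiconj_of_semiconj_glued H' hσ hα
  obtain ⟨f, g, rfl⟩ := exists_eq_sumCongr e (H.map_mem_iff H' hσ hα)
  exact ⟨H.index_eq H' hσ hα,
    ⟨f, fun x => Sum.inl_injective (hσ' (Sum.inl x)), fun x => Sum.inl_injective (hα (Sum.inl x)),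
      Sum.inl_injective hb⟩,
    ⟨g, fun x => Sum.inr_injective (hσ' (Sum.inr x)), fun x => Sum.inr_injective (hα (Sum.inr x)),
      Sum.inr_injective hroot⟩⟩

end CanInsert

theorem IsTwoConnected.exists_insert {M : RootedMap} (hM : M.IsTwoConnected)
    (hlink : M.σ M.root ≠ M.root) (hloop : M.σ M.root ≠ M.α M.root) :
    ∃ (B : RootedMap) (j : ℕ) (N : RootedMap), CanInsert B j N ∧ Iso (insert B j N) M := by
  classical
  obtain ⟨τ, S, c, j, H, hglued⟩ :=
    hM.isNonseparableMap.exists_seriesPair hM.inv hlink hloop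
  let B : RootedMap := ⟨{x // S x}, τ.subtypePerm H.vertex_mem_iff,
    M.α.subtypePerm H.edge_mem_iff, ⟨_, H.b_mem⟩⟩
  let N : RootedMap := ⟨{x // ¬ S x}, τ.subtypePerm (p := (¬ S ·)) H.vertex_notMem_iff,
    M.α.subtypePerm (p := (¬ S ·)) H.edge_notMem_iff, ⟨_, H.a_notMem⟩⟩
  obtain ⟨hB, hN⟩ := H.isNonseparableMap_subtypePerm
  let e : B.Dart ⊕ N.Dart ≃ M.Dart := Equiv.sumCompl S
  have hτ : Semiconj e (Perm.sumCongr B.σ N.σ) τ := by rintro (x | x) <;> rfl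
  have hα : Semiconj e (Perm.sumCongr B.α N.α) M.α := by rintro (x | x) <;> rfl
  have hface : Semiconj Subtype.val (B.σ * B.α) (τ * M.α) := fun x => rfl
  have hpow : ((((B.σ * B.α) ^ j) B.root : B.Dart) : M.Dart) = c := by
    rw [← H.pow_b, ← iterate_eq_pow, hface.iterate_right, iterate_eq_pow]
  refine ⟨B, j, N, ⟨⟨fun x => Subtype.ext (hM.inv x), fun x hx =>
    hM.fpf x (congrArg Subtype.val hx), hB⟩, ⟨fun x => Subtype.ext (hM.inv x), fun x hx =>
    hM.fpf x (congrArg Subtype.val hx), hN⟩, fun h => H.apply_a_ne (congrArg Subtype.val h), H.pos,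
    ?_⟩, e, ?_, hα, rfl⟩
  · have hlen := cycleLength_map (semiconj_mul hτ hα) (Sum.inl B.root)
    rw [Perm.sumCongr_mul, cycleLength_inl] at hlen
    exact H.lt_cycleLength.trans_eq hlen
  · rw [← hglued, ← hpow]
    exact semiconj_glued hτ _ _ _

end RootedMap

theorem cycleCount_one (D : Type*) : cycleCount (1 : Perm D) = Nat.card D :=
  (Nat.card_eq_of_bijective (Quotient.mk _)
    ⟨fun _ _ h => sameCycle_one.1 (Quotient.exact h), Quotient.mk_surjective⟩).symm

theorem boolNot_ne_self (x : Bool) : boolNot x ≠ x := Bool.not_ne_self x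

theorem boolNot_mul_boolNot : (boolNot * boolNot : Perm Bool) = 1 := Equiv.ext Bool.not_not

theorem isConnectedMap_boolNot (σ : Perm Bool) : IsConnectedMap σ boolNot := by
  have h (x : Bool) := componentSetoid_right σ boolNot x
  rintro (_ | _) (_ | _)
  exacts [(componentSetoid σ boolNot).refl _, h false, h true, (componentSetoid σ boolNot).refl _]

theorem cycleCount_boolNot : cycleCount boolNot = 1 := by
  have := two_mul_cycleCount_of_involution Bool.not_not boolNot_ne_self
  rw [Nat.card_eq_fintype_card, Fintype.card_bool] at this
  omega

theorem isNonseparableMap_one_boolNot : IsNonseparableMap (1 : Perm Bool) boolNot where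
  connected := isConnectedMap_boolNot _
  euler := by rw [one_mul, cycleCount_one, cycleCount_boolNot]
  nonseparable _ _ h _ := sameCycle_one.1 h

theorem isNonseparableMap_boolNot_boolNot : IsNonseparableMap (boolNot : Perm Bool) boolNot where
  connected := isConnectedMap_boolNot _
  euler := by rw [boolNot_mul_boolNot, cycleCount_one, cycleCount_boolNot, add_comm]
  nonseparable x y _ h := by rwa [boolNot_mul_boolNot, sameCycle_one] at h

namespace RootedMap

/-- The map with a single edge, of darts `true` (the root) and `false`, and rotation `σ`. -/
def singleEdge (σ : Perm Bool) : RootedMap := ⟨Bool, σ, boolNot, true⟩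

/-- The map with a single edge and two vertices. -/
def link : RootedMap := singleEdge 1

/-- The map with a single edge and one vertex. -/
def loop : RootedMap := singleEdge boolNot

theorem isTwoConnected_link : link.IsTwoConnected :=
  ⟨Bool.not_not, boolNot_ne_self, isNonseparableMap_one_boolNot⟩

theorem isTwoConnected_loop : loop.IsTwoConnected :=
  ⟨Bool.not_not, boolNot_ne_self, isNonseparableMap_boolNot_boolNot⟩

theorem rootDegree_link : link.rootDegree = 2 := by
  have := Nat.fact_prime_two
  exact Function.minimalPeriod_eq_prime (Bool.not_not true) (Bool.not_ne_self true)

theorem rootDegree_loop : loop.rootDegree = 1 :=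
  Function.minimalPeriod_eq_one_iff_isFixedPt.2 rfl

/-- The dart of the root edge of `M` corresponding to a dart of `singleEdge`. -/
def rootEdgeDart (M : RootedMap) (x : Bool) : M.Dart := cond x M.root (M.α M.root)

theorem IsTwoConnected.iso_singleEdge {M : RootedMap} (hM : M.IsTwoConnected) {σ : Perm Bool}
    (h : Semiconj M.rootEdgeDart σ M.σ) : Iso (singleEdge σ) M := by
  have hα : Semiconj M.rootEdgeDart boolNot M.α := by
    rintro (_ | _)
    exacts [(hM.inv _).symm, rfl]
  have hbij : Function.Bijective M.rootEdgeDart := by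
    refine ⟨?_, fun y => ?_⟩
    · rintro (_ | _) (_ | _) hxy
      exacts [rfl, absurd hxy (hM.fpf _), absurd hxy.symm (hM.fpf _), rfl]
    · refine (iff_of_componentSetoid (p := (· ∈ Set.range M.rootEdgeDart)) ?_ ?_
        (hM.isNonseparableMap.connected M.root y)).1 ⟨true, rfl⟩
      · rintro _ ⟨x, rfl⟩
        exact ⟨_, h x⟩
      · rintro _ ⟨x, rfl⟩
        exact ⟨_, hα x⟩
  exact ⟨.ofBijective _ hbij, h, hα, rfl⟩

theorem IsTwoConnected.iso_link {M : RootedMap} (hM : M.IsTwoConnected)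
    (h : M.σ M.root = M.root) : Iso link M := by
  have hface : (M.σ * M.α).SameCycle (M.α M.root) (M.σ (M.α M.root)) :=
    SameCycle.trans (y := M.root) ⟨1, by rw [zpow_one, Perm.mul_apply, hM.inv, h]⟩
      (sameCycle_self_apply (M.σ * M.α) M.root)
  have hopp := hM.isNonseparableMap.nonseparable _ _ (sameCycle_self_apply M.σ (M.α M.root)) hface
  refine hM.iso_singleEdge ?_
  rintro (_ | _)
  exacts [hopp, h.symm]

theorem IsTwoConnected.iso_loop {M : RootedMap} (hM : M.IsTwoConnected)
    (h : M.σ M.root = M.α M.root) : Iso loop M := by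
  have hvertex : M.σ.SameCycle M.root (M.σ (M.α M.root)) :=
    h ▸ (sameCycle_self_apply M.σ M.root).trans (sameCycle_self_apply M.σ (M.σ M.root))
  have hopp := hM.isNonseparableMap.nonseparable _ _ hvertex
    (sameCycle_self_apply (M.σ * M.α) M.root)
  refine hM.iso_singleEdge ?_
  rintro (_ | _)
  exacts [hopp, h.symm]

end RootedMap

open RootedMap (Iso CanInsert)

/-- Expressions building a nonseparable map from links and loops by series insertions. -/
inductive Code where
  | link : Code
  | loop : Code
  | insert (B : Code) (j : ℕ) (M : Code) : Code

namespace Code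

/-- The number of edges of the map described by a code. -/
def size : Code → ℕ
  | link => 1
  | loop => 1
  | insert B _ M => B.size + M.size

/-- The degree of the root face of the map described by a valid code. -/
def degree : Code → ℕ
  | link => 2
  | loop => 1
  | insert B j M => M.degree + (B.degree - j)

/-- The codes all of whose insertions satisfy `RootedMap.CanInsert`. -/
def Valid : Code → Prop
  | link => True
  | loop => True
  | insert B j M => B.Valid ∧ M.Valid ∧ M ≠ link ∧ 0 < j ∧ j < B.degree

/-- The map described by a code. -/
noncomputable def toMap : Code → RootedMap
  | link => .link
  | loop => .loop
  | insert B j M => B.toMap.insert j M.toMap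

theorem card_toMap (c : Code) : Nat.card c.toMap.Dart = 2 * c.size := by
  induction c with
  | link | loop =>
    have hcard : Nat.card Bool = 2 := by rw [Nat.card_eq_fintype_card, Fintype.card_bool]
    exact hcard
  | insert B _ M hB hM =>
    have hcard : Nat.card (B.toMap.Dart ⊕ M.toMap.Dart) = _ := Nat.card_sum
    rw [hB, hM, ← mul_add] at hcard
    exact hcard

theorem Valid.toMap_spec {c : Code} (h : c.Valid) : c.toMap.IsTwoConnected ∧
    c.toMap.rootDegree = c.degree ∧ (c.toMap.σ c.toMap.root = c.toMap.root ↔ c = link) := by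
  induction c with
  | link => exact ⟨RootedMap.isTwoConnected_link, RootedMap.rootDegree_link, iff_of_true rfl rfl⟩
  | loop =>
    exact ⟨RootedMap.isTwoConnected_loop, RootedMap.rootDegree_loop,
      iff_of_false (Bool.not_ne_self true) Code.noConfusion⟩
  | insert B j M ihB ihM =>
    have ⟨vB, vM, hne, hpos, hlt⟩ := h
    obtain ⟨hB, hBdeg, -⟩ := ihB vB
    obtain ⟨hM, hMdeg, hMroot⟩ := ihM vM
    have hcan : CanInsert B.toMap j M.toMap := ⟨hB, hM, mt hMroot.1 hne, hpos, hBdeg ▸ hlt⟩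
    refine ⟨hcan.isTwoConnected_insert, ?_,
      iff_of_false hcan.insert_apply_root_ne Code.noConfusion⟩
    rw [degree, ← hBdeg, ← hMdeg]
    exact hcan.rootDegree_insert

theorem Valid.isTwoConnected_toMap {c : Code} (h : c.Valid) : c.toMap.IsTwoConnected :=
  h.toMap_spec.1

theorem Valid.rootDegree_toMap {c : Code} (h : c.Valid) : c.toMap.rootDegree = c.degree :=
  h.toMap_spec.2.1

theorem Valid.apply_root_eq_root_iff {c : Code} (h : c.Valid) :
    c.toMap.σ c.toMap.root = c.toMap.root ↔ c = link :=
  h.toMap_spec.2.2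

theorem Valid.canInsert {B M : Code} {j : ℕ} (h : (insert B j M).Valid) :
    CanInsert B.toMap j M.toMap := by
  obtain ⟨vB, vM, hne, hpos, hlt⟩ := h
  exact ⟨vB.isTwoConnected_toMap, vM.isTwoConnected_toMap, mt vM.apply_root_eq_root_iff.1 hne, hpos,
    vB.rootDegree_toMap ▸ hlt⟩

theorem eq_of_iso {c c' : Code} (h : c.Valid) (h' : c'.Valid) (hiso : Iso c.toMap c'.toMap) :
    c = c' := by
  induction c generalizing c' with
  | link => exact (h'.apply_root_eq_root_iff.1 (hiso.apply_root_eq_root_iff.1 rfl)).symm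
  | loop =>
    have hroot := hiso.apply_root_eq_opposite_iff.1 rfl
    cases c' with
    | link => exact absurd hroot.symm (Bool.not_ne_self true)
    | loop => rfl
    | insert B' j' M' => exact absurd hroot h'.canInsert.insert_apply_root_ne_opposite
  | insert B j M ihB ihM =>
    cases c' with
    | link =>
      exact absurd (hiso.apply_root_eq_root_iff.2 rfl) h.canInsert.insert_apply_root_ne
    | loop =>
      exact absurd (hiso.apply_root_eq_opposite_iff.2 rfl)
        h.canInsert.insert_apply_root_ne_opposite
    | insert B' j' M' =>
      obtain ⟨rfl, hB, hM⟩ := h.canInsert.insert_inj h'.canInsert hiso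
      rw [ihB h.1 h'.1 hB, ihM h.2.1 h'.2.1 hM]

theorem exists_code (M : RootedMap) (hM : M.IsTwoConnected) :
    ∃ c : Code, c.Valid ∧ Iso c.toMap M := by
  induction hn : Nat.card M.Dart using Nat.strong_induction_on generalizing M with
  | _ n ih =>
    by_cases hlink : M.σ M.root = M.root
    · exact ⟨link, trivial, hM.iso_link hlink⟩
    by_cases hloop : M.σ M.root = M.α M.root
    · exact ⟨loop, trivial, hM.iso_loop hloop⟩
    obtain ⟨B, j, N, hcan, hiso⟩ := hM.exists_insert hlink hloop
    have hcard : Nat.card (B.Dart ⊕ N.Dart) = Nat.card M.Dart := hiso.card_eq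
    have : Nonempty B.Dart := ⟨B.root⟩
    have : Nonempty N.Dart := ⟨N.root⟩
    have hBpos : 0 < Nat.card B.Dart := Nat.card_pos
    have hNpos : 0 < Nat.card N.Dart := Nat.card_pos
    rw [Nat.card_sum] at hcard
    obtain ⟨b, vb, isob⟩ := ih _ (by omega) B hcan.block rfl
    obtain ⟨m, vm, isom⟩ := ih _ (by omega) N hcan.host rfl
    refine ⟨insert b j m, ⟨vb, vm, ?_, hcan.pos, ?_⟩, (isob.insert isom j).trans hiso⟩
    · rintro rfl
      exact hcan.apply_root_ne (isom.apply_root_eq_root_iff.1 rfl)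
    · rw [← vb.rootDegree_toMap, isob.rootDegree_eq]
      exact hcan.lt_rootDegree

end Code

/-- The map on arbitrary darts underlying a map on `Fin (2 * k)`. -/
def RMap.toRootedMap {k : ℕ} (M : RMap k) : RootedMap := ⟨Fin (2 * k), M.σ, M.α, M.root⟩

theorem RootedMap.IsTwoConnected.exists_rmap {k : ℕ} {M : RootedMap} (hM : M.IsTwoConnected)
    (hk : Nat.card M.Dart = 2 * k) :
    ∃ N : {N : RMap k // ¬ N.Separable}, Iso M N.1.toRootedMap := by
  have e : M.Dart ≃ Fin (2 * k) := Finite.equivFinOfCardEq hk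
  have hiso : Iso M ⟨Fin (2 * k), e.permCongr M.σ, e.permCongr M.α, e M.root⟩ :=
    ⟨e, fun d => by simp, fun d => by simp, rfl⟩
  obtain ⟨hinv, hfpf, hmap⟩ := hiso.isTwoConnected hM
  refine ⟨⟨⟨e.permCongr M.σ, e.permCongr M.α, e M.root, hinv, hfpf,
    fun x y => exists_mem_closure_of_componentSetoid (hmap.connected x y), ?_⟩,
    fun hs => RMap.not_nonseparable_of_separable _ hs hmap.nonseparable⟩, hiso⟩
  have hedges := two_mul_cycleCount_of_involution hinv hfpf
  have heuler := hmap.euler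
  rw [Nat.card_fin] at hedges heuler
  rw [numCycles_eq_cycleCount, numCycles_eq_cycleCount]
  dsimp only at hedges heuler
  omega

theorem rmapIso_equivalence (k : ℕ) :
    Equivalence (fun M M' : {M : RMap k // ¬ M.Separable} => RMapIso M.1 M'.1) where
  refl _ := ⟨1, fun _ => rfl, fun _ => rfl, rfl⟩
  symm h := Iso.symm (M := RMap.toRootedMap _) (M' := RMap.toRootedMap _) h
  trans h h' := Iso.trans (M := RMap.toRootedMap _) (M' := RMap.toRootedMap _)
    (M'' := RMap.toRootedMap _) h h'

theorem bconnCount_eq_card_codes {k : ℕ} (hk : k ≠ 0) :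
    bconnCount k = Nat.card {c : Code // c.Valid ∧ c.size = k} := by
  have hmap (c : {c : Code // c.Valid ∧ c.size = k}) :
      ∃ N : {N : RMap k // ¬ N.Separable}, Iso c.1.toMap N.1.toRootedMap :=
    c.2.1.isTwoConnected_toMap.exists_rmap (by rw [Code.card_toMap, c.2.2])
  choose F hF using hmap
  rw [bconnCount, if_neg hk]
  refine (Nat.card_eq_of_bijective (fun c => Quot.mk _ (F c)) ⟨fun c c' hcc' => ?_, ?_⟩).symm
  · have hiso : Iso (F c).1.toRootedMap (F c').1.toRootedMap :=
      ((rmapIso_equivalence k).quot_mk_eq_iff _ _).1 hcc'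
    exact Subtype.ext (Code.eq_of_iso c.2.1 c'.2.1 (((hF c).trans hiso).trans (hF c').symm))
  · rintro ⟨N⟩
    obtain ⟨c, hc, hiso⟩ := Code.exists_code N.1.toRootedMap
      ⟨N.1.inv, N.1.fpf, RMap.isNonseparableMap N.1 N.2⟩
    have hsize : c.size = k := by
      have hcard := hiso.card_eq
      rw [Code.card_toMap, show Nat.card N.1.toRootedMap.Dart = 2 * k from Nat.card_fin _] at hcard
      omega
    have hiso' : Iso (F ⟨c, hc, hsize⟩).1.toRootedMap N.1.toRootedMap := (hF _).symm.trans hiso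
    exact ⟨⟨c, hc, hsize⟩, Quot.sound hiso'⟩

namespace Code

theorem size_pos (c : Code) : 0 < c.size := by
  induction c with
  | link | loop => exact one_pos
  | insert B _ M hB _ => exact Nat.add_pos_left hB _

theorem Valid.degree_pos {c : Code} (h : c.Valid) : 0 < c.degree := by
  induction c with
  | link => exact two_pos
  | loop => exact one_pos
  | insert B _ M _ hM => exact Nat.add_pos_left (hM h.2.1) _

theorem finite_valid_size_le (n : ℕ) : {c : Code | c.Valid ∧ c.size ≤ n}.Finite := by
  induction n with
  | zero => exact Set.finite_empty.subset fun c hc => (c.size_pos.not_ge hc.2).elim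
  | succ n ih =>
    have hfin : (({link, loop} : Set Code) ∪ ⋃ B ∈ {c : Code | c.Valid ∧ c.size ≤ n},
        ⋃ j ∈ Set.Iio B.degree, insert B j '' {c : Code | c.Valid ∧ c.size ≤ n}).Finite :=
      (Set.toFinite _).union (ih.biUnion fun B _ => (Set.finite_Iio _).biUnion fun j _ =>
        ih.image _)
    refine hfin.subset ?_
    rintro (_ | _ | ⟨B, j, M⟩) ⟨hc, hs⟩
    · exact Or.inl (Or.inl rfl)
    · exact Or.inl (Or.inr rfl)
    · obtain ⟨hB, hM, -, -, hj⟩ := hc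
      have hBpos := B.size_pos
      have hMpos := M.size_pos
      rw [size] at hs
      exact Or.inr (Set.mem_biUnion ⟨hB, by omega⟩
        (Set.mem_biUnion hj ⟨M, ⟨hM, by omega⟩, rfl⟩))

/-- The valid codes of the maps with `n` edges. -/
noncomputable def codes (n : ℕ) : Finset Code :=
  ((finite_valid_size_le n).subset (t := {c : Code | c.Valid ∧ c.size = n})
    fun _ h => ⟨h.1, h.2.le⟩).toFinset

theorem mem_codes {n : ℕ} {c : Code} : c ∈ codes n ↔ c.Valid ∧ c.size = n := by
  simp only [codes, Set.Finite.mem_toFinset, Set.mem_ofPred_eq]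

theorem card_codes (n : ℕ) : (codes n).card = Nat.card {c : Code // c.Valid ∧ c.size = n} := by
  rw [← Nat.card_eq_finsetCard]
  exact Nat.card_congr (Equiv.subtypeEquivRight fun c => mem_codes)

theorem codes_zero : codes 0 = ∅ :=
  Finset.eq_empty_of_forall_notMem fun c hc => c.size_pos.ne' (mem_codes.1 hc).2

theorem link_mem_codes {n : ℕ} : link ∈ codes n ↔ n = 1 :=
  mem_codes.trans ((iff_of_eq (true_and _)).trans eq_comm)

theorem loop_mem_codes {n : ℕ} : loop ∈ codes n ↔ n = 1 :=
  mem_codes.trans ((iff_of_eq (true_and _)).trans eq_comm)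

open Classical in
/-- The valid codes, other than `link`, of the maps with `n` edges. -/
noncomputable def nonLinkCodes (n : ℕ) : Finset Code := (codes n).erase link

theorem mem_nonLinkCodes {n : ℕ} {c : Code} :
    c ∈ nonLinkCodes n ↔ c ≠ link ∧ c.Valid ∧ c.size = n := by
  classical rw [nonLinkCodes, Finset.mem_erase, mem_codes]

/-- The pairs of a code `B` of a map with `n` edges and a position `j` at which a map can be
inserted into it. -/
noncomputable def insertionSites (n : ℕ) : Finset (Σ _ : Code, ℕ) :=
  (codes n).sigma fun B => Finset.Ico 1 B.degree

theorem mem_insertionSites {n : ℕ} {s : Σ _ : Code, ℕ} :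
    s ∈ insertionSites n ↔ (s.1.Valid ∧ s.1.size = n) ∧ 0 < s.2 ∧ s.2 < s.1.degree := by
  rw [insertionSites, Finset.mem_sigma, mem_codes, Finset.mem_Ico, Nat.succ_le_iff]

open Polynomial
open Finset.HasAntidiagonal (antidiagonal mem_antidiagonal)

/-- The enumerator, by root face degree, of the nonseparable maps with `n` edges. -/
noncomputable def degreeEnumerator (n : ℕ) : ℚ[X] := ∑ c ∈ codes n, X ^ c.degree

/-- The enumerator, by root face degree, of the nonseparable maps with `n` edges other than the
link. -/
noncomputable def nonLinkEnumerator (n : ℕ) : ℚ[X] := ∑ c ∈ nonLinkCodes n, X ^ c.degree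

/-- The enumerator of the insertion sites in maps with `n` edges, by their contribution to the root
face degree after insertion. -/
noncomputable def siteEnumerator (n : ℕ) : ℚ[X] :=
  ∑ s ∈ insertionSites n, X ^ (s.1.degree - s.2)

theorem eval_one_degreeEnumerator (n : ℕ) : (degreeEnumerator n).eval 1 = (codes n).card := by
  simp only [degreeEnumerator, eval_finsetSum, eval_pow, eval_X, one_pow, Finset.sum_const,
    nsmul_eq_mul, mul_one]

theorem sub_one_mul_siteEnumerator (n : ℕ) : (X - 1) * siteEnumerator n =
    degreeEnumerator n - X * C ((degreeEnumerator n).eval 1) := by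
  have hgeom {d : ℕ} (hd : 1 ≤ d) :
      (X - 1) * ∑ j ∈ Finset.Ico 1 d, (X : ℚ[X]) ^ (d - j) = X ^ d - X := by
    rw [Finset.sum_Ico_reflect _ _ d.le_succ, Nat.add_sub_cancel_left, Nat.add_sub_cancel,
      mul_comm, geom_sum_Ico_mul _ hd, pow_one]
  rw [eval_one_degreeEnumerator, siteEnumerator, degreeEnumerator, insertionSites,
    Finset.sum_sigma, Finset.mul_sum, map_natCast, ← nsmul_eq_mul', ← Finset.sum_const,
    ← Finset.sum_sub_distrib]
  exact Finset.sum_congr rfl fun B hB => hgeom (mem_codes.1 hB).1.degree_pos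

theorem degreeEnumerator_eq (n : ℕ) :
    degreeEnumerator n = nonLinkEnumerator n + if n = 1 then X ^ 2 else 0 := by
  classical
  rw [degreeEnumerator, nonLinkEnumerator, nonLinkCodes]
  split_ifs with h
  · exact (Finset.sum_erase_add _ _ (link_mem_codes.2 h)).symm
  · rw [Finset.erase_eq_of_notMem (mt link_mem_codes.1 h), add_zero]

open Classical in
theorem sum_insertions {A : Type*} [AddCommMonoid A] (n : ℕ) (f : Code → A) :
    ∑ c ∈ (nonLinkCodes n).erase loop, f c =
      ∑ p ∈ antidiagonal n, ∑ q ∈ insertionSites p.1 ×ˢ nonLinkCodes p.2,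
        f (insert q.1.1 q.1.2 q.2) := by
  rw [Finset.sum_sigma']
  symm
  refine Finset.sum_nbij (fun x => insert x.2.1.1 x.2.1.2 x.2.2) ?_ ?_ ?_ fun _ _ => rfl
  · rintro ⟨⟨a, b⟩, ⟨B, j⟩, M⟩ hx
    obtain ⟨hab, hsite, hM⟩ := by
      simpa only [Finset.mem_sigma, mem_antidiagonal, Finset.mem_product] using hx
    obtain ⟨⟨vB, hBa⟩, hj⟩ := mem_insertionSites.1 hsite
    obtain ⟨hne, vM, hMb⟩ := mem_nonLinkCodes.1 hM
    refine Finset.mem_erase.2 ⟨Code.noConfusion, mem_nonLinkCodes.2 ⟨Code.noConfusion,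
      ⟨vB, vM, hne, hj⟩, ?_⟩⟩
    rw [size, hBa, hMb, hab]
  · have hsize {x : Σ _ : ℕ × ℕ, (Σ _ : Code, ℕ) × Code}
        (hx : x ∈ (antidiagonal n).sigma fun p => insertionSites p.1 ×ˢ nonLinkCodes p.2) :
        x.1 = (x.2.1.1.size, x.2.2.size) := by
      obtain ⟨hsite, hM⟩ := Finset.mem_product.1 (Finset.mem_sigma.1 hx).2
      exact Prod.ext (mem_insertionSites.1 hsite).1.2.symm (mem_nonLinkCodes.1 hM).2.2.symm
    rintro ⟨p, ⟨B, j⟩, M⟩ hx ⟨p', ⟨B', j'⟩, M'⟩ hx' heq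
    obtain ⟨rfl, rfl, rfl⟩ := insert.inj heq
    obtain rfl : p = p' := (hsize hx).trans (hsize hx').symm
    rfl
  · intro c hc
    obtain ⟨hloop, hc⟩ := Finset.mem_erase.1 hc
    obtain ⟨hlink, hvalid, hsize⟩ := mem_nonLinkCodes.1 hc
    cases c with
    | link => exact absurd rfl hlink
    | loop => exact absurd rfl hloop
    | insert B j M =>
      obtain ⟨vB, vM, hne, hj⟩ := hvalid
      refine ⟨⟨(B.size, M.size), ⟨B, j⟩, M⟩, ?_, rfl⟩
      exact Finset.mem_sigma.2 ⟨mem_antidiagonal.2 hsize, Finset.mem_product.2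
        ⟨mem_insertionSites.2 ⟨⟨vB, rfl⟩, hj⟩, mem_nonLinkCodes.2 ⟨hne, vM, rfl⟩⟩⟩

theorem nonLinkEnumerator_eq (n : ℕ) : nonLinkEnumerator n = (if n = 1 then X else 0) +
    ∑ p ∈ antidiagonal n, siteEnumerator p.1 * nonLinkEnumerator p.2 := by
  classical
  have hloop : nonLinkEnumerator n = (if n = 1 then X else 0) +
      ∑ c ∈ (nonLinkCodes n).erase loop, X ^ c.degree := by
    have hmem : loop ∈ nonLinkCodes n ↔ n = 1 := by
      rw [nonLinkCodes, Finset.mem_erase, loop_mem_codes]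
      exact and_iff_right Code.noConfusion
    rw [nonLinkEnumerator]
    split_ifs with h
    · rw [← Finset.add_sum_erase _ _ (hmem.2 h), degree, pow_one]
    · rw [Finset.erase_eq_of_notMem (mt hmem.1 h), zero_add]
  rw [hloop, sum_insertions]
  refine congrArg _ (Finset.sum_congr rfl fun p _ => ?_)
  rw [siteEnumerator, nonLinkEnumerator, Finset.sum_mul_sum, Finset.sum_product]
  refine Finset.sum_congr rfl fun s _ => Finset.sum_congr rfl fun M _ => ?_
  rw [degree, pow_add, mul_comm]

end Code

section FormalSeries

open PowerSeries
open scoped Polynomial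

variable {R : Type*} [CommRing R]

theorem eq_of_forall_X_pow_dvd_sub {a b : R⟦X⟧} (h : ∀ n, X ^ n ∣ a - b) : a = b := by
  ext n
  rw [← sub_eq_zero, ← map_sub]
  exact X_pow_dvd_iff.1 (h (n + 1)) n n.lt_succ_self

theorem exists_eq_of_contracting {F : R⟦X⟧ → R⟦X⟧}
    (hF : ∀ n a b, X ^ n ∣ a - b → X ^ (n + 1) ∣ F a - F b) : ∃ w, w = F w := by
  have hiter (n : ℕ) (a b : R⟦X⟧) : X ^ n ∣ F^[n] a - F^[n] b := by
    induction n with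
    | zero => exact pow_zero (X : R⟦X⟧) ▸ one_dvd _
    | succ n ih =>
      rw [Function.iterate_succ_apply', Function.iterate_succ_apply']
      exact hF n _ _ ih
  let w : R⟦X⟧ := PowerSeries.mk fun n => coeff n (F^[n + 1] 0)
  have hlim (n : ℕ) : X ^ n ∣ w - F^[n] 0 := by
    refine X_pow_dvd_iff.2 fun m hm => ?_
    obtain ⟨k, rfl⟩ := Nat.exists_eq_add_of_le (Nat.succ_le_of_lt hm)
    rw [map_sub, coeff_mk, ← map_sub, Function.iterate_add_apply F m.succ]
    exact X_pow_dvd_iff.1 (hiter (m + 1) 0 (F^[k] 0)) m m.lt_succ_self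
  refine ⟨w, eq_of_forall_X_pow_dvd_sub fun n => (pow_dvd_pow _ n.le_succ).trans ?_⟩
  rw [← sub_sub_sub_cancel_right _ _ (F^[n + 1] 0)]
  refine dvd_sub (hlim (n + 1)) ?_
  rw [Function.iterate_succ_apply']
  exact hF n _ _ (hlim n)

theorem exists_eq_add_X_mul {G : R⟦X⟧ → R⟦X⟧} (hG : ∀ a b, a - b ∣ G a - G b) (c : R⟦X⟧) :
    ∃ w, w = c + X * G w := by
  refine exists_eq_of_contracting fun n a b h => ?_
  rw [add_sub_add_left_eq_sub, ← mul_sub, pow_succ']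
  exact mul_dvd_mul_left X (h.trans (hG a b))

theorem exists_eq_add_mul_quadratic {T : R⟦X⟧} (hT : X ∣ T) (a b c : R⟦X⟧) :
    ∃ w, w = a + T * (b * w + c * w ^ 2) := by
  obtain ⟨U, rfl⟩ := hT
  obtain ⟨w, hw⟩ := exists_eq_add_X_mul (G := fun w => U * (b * w + c * w ^ 2))
    (fun x y => ⟨U * (b + c * (x + y)), by ring⟩) a
  exact ⟨w, by rwa [mul_assoc]⟩

variable (R) in
theorem exists_mul_one_sub_sq_eq_X : ∃ t : R⟦X⟧, X ∣ t ∧ t * (1 - t) ^ 2 = X := by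
  obtain ⟨u, hu⟩ := exists_eq_add_X_mul (G := fun u : R⟦X⟧ => 2 * u ^ 2 - X * u ^ 3)
    (fun a b => ⟨2 * (a + b) - X * (a ^ 2 + a * b + b ^ 2), by ring⟩) 1
  exact ⟨X * u, dvd_mul_right X u, by linear_combination X * hu⟩

section Parametrization

variable {t : R⟦X⟧}

theorem derivative_parameter (ht : t * (1 - t) ^ 2 = X) :
    d⁄dX R t * ((1 - t) * (1 - 3 * t)) = 1 := by
  have h := congrArg (d⁄dX R) ht
  simp only [Derivation.leibniz, Derivation.leibniz_pow, map_sub, Derivation.map_one_eq_zero,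
    derivative_X, smul_eq_mul, nsmul_eq_mul] at h
  push_cast at h
  linear_combination h

theorem derivative_ofNat (m : ℕ) [m.AtLeastTwo] : d⁄dX R (ofNat(m) : R⟦X⟧) = 0 :=
  Derivation.map_natCast _ m

theorem one_sub_mul_derivative (ht : t * (1 - t) ^ 2 = X) :
    (1 - t) * d⁄dX R (2 * t - 3 * t ^ 2) = 2 := by
  simp only [Derivation.leibniz, Derivation.leibniz_pow, map_sub, derivative_ofNat, smul_eq_mul,
    nsmul_eq_mul]
  push_cast
  linear_combination 2 * derivative_parameter ht

theorem one_sub_mul_derivative_derivative (ht : t * (1 - t) ^ 2 = X) :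
    (1 - t) ^ 3 * (1 - 3 * t) * d⁄dX R (d⁄dX R (2 * t - 3 * t ^ 2)) = 2 := by
  have hfirst := one_sub_mul_derivative ht
  have hsecond := congrArg (d⁄dX R) hfirst
  simp only [Derivation.leibniz _ (1 - t), map_sub _ 1 t, Derivation.map_one_eq_zero,
    derivative_ofNat, smul_eq_mul] at hsecond
  linear_combination (1 - t) ^ 2 * (1 - 3 * t) * hsecond + hfirst +
    (1 - t) * d⁄dX R (2 * t - 3 * t ^ 2) * derivative_parameter ht

/-- The linear differential equation with polynomial coefficients satisfied by the generating
series of nonseparable maps. -/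
def SatisfiesODE (f : R⟦X⟧) : Prop :=
  4 * (X * d⁄dX R (d⁄dX R f)) + 2 * d⁄dX R f = 27 * (X * (X * d⁄dX R (d⁄dX R f))) + 6 * f + 4

theorem satisfiesODE_of_parametrization (ht : t * (1 - t) ^ 2 = X) :
    SatisfiesODE (2 * t - 3 * t ^ 2) := by
  have hunit : IsUnit ((1 - t) * (1 - 3 * t)) :=
    IsUnit.of_mul_eq_one_right _ (derivative_parameter ht)
  have hunit' : IsUnit ((1 - t) ^ 3 * (1 - 3 * t)) :=
    ((isUnit_of_mul_isUnit_left hunit).pow 3).mul (isUnit_of_mul_isUnit_right hunit)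
  refine hunit'.mul_left_cancel ?_
  rw [← ht]
  linear_combination
    (4 * (t * (1 - t) ^ 2) - 27 * (t * (1 - t) ^ 2) ^ 2) * one_sub_mul_derivative_derivative ht +
      2 * (1 - t) ^ 2 * (1 - 3 * t) * one_sub_mul_derivative ht

end Parametrization

theorem coeff_ofNat_mul (m : ℕ) [m.AtLeastTwo] (n : ℕ) (f : R⟦X⟧) :
    coeff n ((ofNat(m) : R⟦X⟧) * f) = ofNat(m) * coeff n f := by
  rw [← map_ofNat (PowerSeries.C (R := R)), coeff_C_mul]

theorem coeff_ofNat (m : ℕ) [m.AtLeastTwo] (n : ℕ) :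
    coeff n (ofNat(m) : R⟦X⟧) = if n = 0 then ofNat(m) else 0 := by
  rw [← map_ofNat (PowerSeries.C (R := R)), coeff_C]

theorem SatisfiesODE.coeff_one {f : R⟦X⟧} (h : SatisfiesODE f) :
    2 * coeff 1 f = 6 * coeff 0 f + 4 := by
  have h0 := congrArg (coeff 0) h
  simp only [map_add, coeff_ofNat_mul, coeff_ofNat, coeff_zero_X_mul,
    coeff_derivative] at h0
  push_cast at h0
  linear_combination h0

theorem SatisfiesODE.coeff_succ {f : R⟦X⟧} (h : SatisfiesODE f) {k : ℕ} (hk : k ≠ 0) :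
    2 * (k + 1) * (2 * k + 1) * coeff (k + 1) f = 3 * (3 * k - 1) * (3 * k - 2) * coeff k f := by
  obtain ⟨k, rfl⟩ := Nat.exists_eq_succ_of_ne_zero hk
  have hcoeff := congrArg (coeff (k + 1)) h
  obtain _ | k := k
  all_goals
    simp only [map_add, coeff_ofNat_mul, coeff_ofNat, if_neg (Nat.succ_ne_zero _),
      coeff_succ_X_mul, coeff_zero_X_mul, coeff_derivative] at hcoeff
    push_cast at hcoeff ⊢
    linear_combination hcoeff

end FormalSeries

theorem mul_factorial_eq_of_recurrence {c : ℕ → ℚ} (h1 : c 1 = 2)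
    (h : ∀ k : ℕ, k ≠ 0 → 2 * (k + 1) * (2 * k + 1) * c (k + 1) =
      3 * (3 * k - 1) * (3 * k - 2) * c k) {k : ℕ} (hk : 1 ≤ k) :
    c k * (k.factorial * (2 * k - 1).factorial) = 2 * (3 * k - 3).factorial := by
  induction k, hk using Nat.le_induction with
  | base => simp [h1]
  | succ k hk ih =>
    obtain ⟨m, rfl⟩ := Nat.exists_eq_add_of_le' hk
    have hrec := h (m + 1) m.succ_ne_zero
    have e₁ : 2 * (m + 1) - 1 = 2 * m + 1 := by omega
    have e₂ : 3 * (m + 1) - 3 = 3 * m := by omega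
    have e₃ : 2 * (m + 1 + 1) - 1 = 2 * m + 1 + 1 + 1 := by omega
    have e₄ : 3 * (m + 1 + 1) - 3 = 3 * m + 1 + 1 + 1 := by omega
    rw [e₁, e₂] at ih
    rw [e₃, e₄]
    simp only [Nat.factorial_succ (m + 1), Nat.factorial_succ (2 * m + 1 + 1),
      Nat.factorial_succ (2 * m + 1), Nat.factorial_succ (3 * m + 1 + 1),
      Nat.factorial_succ (3 * m + 1), Nat.factorial_succ (3 * m)]
    push_cast at hrec ⊢
    linear_combination (m + 1 : ℚ) * (m + 1).factorial * (2 * m + 1).factorial * hrec +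
      3 * (3 * (m + 1) - 1) * (3 * (m + 1) - 2) * (m + 1 : ℚ) * ih

section Catalytic

open PowerSeries
open scoped Polynomial

/-- The specialisation of the catalytic variable to `1`. -/
noncomputable def evalOne : ℚ[X]⟦X⟧ →+* ℚ⟦X⟧ := PowerSeries.map (Polynomial.evalRingHom 1)

/-- The embedding of the series not involving the catalytic variable. -/
noncomputable def constSeries : ℚ⟦X⟧ →+* ℚ[X]⟦X⟧ := PowerSeries.map Polynomial.C

/-- The catalytic variable, which marks the degree of the root face; the power series variable marks
edges. -/
noncomputable def catVar : ℚ[X]⟦X⟧ := PowerSeries.C Polynomial.X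

theorem evalOne_constSeries (f : ℚ⟦X⟧) : evalOne (constSeries f) = f := by
  ext n
  simp only [evalOne, constSeries, coeff_map, Polynomial.coe_evalRingHom, Polynomial.eval_C]

theorem evalOne_catVar : evalOne catVar = 1 := by
  rw [evalOne, catVar, map_C, Polynomial.coe_evalRingHom, Polynomial.eval_X, map_one]

theorem evalOne_X : evalOne X = X := map_X _

theorem constSeries_X : constSeries X = X := map_X _

theorem catVar_sub_one : catVar - 1 = PowerSeries.C (Polynomial.X - 1) := by
  rw [map_sub, map_one, catVar]

/-- The factor `F(y) - y F(1)`, where `y` is `catVar` and `F = L + z y²` is obtained from `L` by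
adding the contribution of the link, `z` being the power series variable. -/
noncomputable def catalyticKernel (L : ℚ[X]⟦X⟧) : ℚ[X]⟦X⟧ :=
  L + X * catVar ^ 2 - catVar * constSeries (evalOne L + X)

/-- The functional equation of the generating series of nonseparable maps other than the link. -/
def SatisfiesCatalyticEq (L : ℚ[X]⟦X⟧) : Prop :=
  (catVar - 1) * L = X * catVar * (catVar - 1) + catalyticKernel L * L

theorem catalyticKernel_sub (L L' : ℚ[X]⟦X⟧) : catalyticKernel L - catalyticKernel L' =
    L - L' - catVar * constSeries (evalOne (L - L')) := by
  simp only [catalyticKernel, map_add, map_sub]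
  ring

theorem X_pow_dvd_constSeries_evalOne {n : ℕ} {f : ℚ[X]⟦X⟧} (h : X ^ n ∣ f) :
    X ^ n ∣ constSeries (evalOne f) := by
  have hmap := map_dvd (constSeries.comp evalOne) h
  rwa [map_pow, RingHom.comp_apply, RingHom.comp_apply, evalOne_X, constSeries_X] at hmap

theorem X_dvd_catalyticKernel {L : ℚ[X]⟦X⟧} (h : X ∣ L) : X ∣ catalyticKernel L := by
  have hconst := X_pow_dvd_constSeries_evalOne (n := 1) (pow_one (X : ℚ[X]⟦X⟧) ▸ h)
  rw [pow_one] at hconst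
  rw [catalyticKernel, map_add, constSeries_X]
  exact dvd_sub (dvd_add h (dvd_mul_right _ _)) ((dvd_add hconst dvd_rfl).mul_left _)

theorem X_pow_dvd_of_catVar_sub_one_mul {n : ℕ} {f : ℚ[X]⟦X⟧} (h : X ^ n ∣ (catVar - 1) * f) :
    X ^ n ∣ f := by
  refine X_pow_dvd_iff.2 fun m hm => ?_
  have hcoeff := X_pow_dvd_iff.1 h m hm
  rw [catVar_sub_one, coeff_C_mul] at hcoeff
  exact (mul_eq_zero.1 hcoeff).resolve_left (Polynomial.X_sub_C_ne_zero 1)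

theorem SatisfiesCatalyticEq.unique {L L' : ℚ[X]⟦X⟧} (h : SatisfiesCatalyticEq L)
    (h' : SatisfiesCatalyticEq L') (hL : X ∣ L) (hL' : X ∣ L') : L = L' := by
  refine eq_of_forall_X_pow_dvd_sub fun n => ?_
  induction n with
  | zero => exact pow_zero (X : ℚ[X]⟦X⟧) ▸ one_dvd _
  | succ n ih =>
    have hdiff : (catVar - 1) * (L - L') = catalyticKernel L * (L - L') +
        (catalyticKernel L - catalyticKernel L') * L' := by
      rw [SatisfiesCatalyticEq] at h h'
      linear_combination h - h'
    have hkernel : X ^ n ∣ catalyticKernel L - catalyticKernel L' := by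
      rw [catalyticKernel_sub]
      exact dvd_sub ih ((X_pow_dvd_constSeries_evalOne ih).mul_left _)
    refine X_pow_dvd_of_catVar_sub_one_mul ?_
    rw [hdiff]
    refine dvd_add ?_ (pow_succ (X : ℚ[X]⟦X⟧) n ▸ mul_dvd_mul hkernel hL')
    exact pow_succ' (X : ℚ[X]⟦X⟧) n ▸ mul_dvd_mul (X_dvd_catalyticKernel hL) ih

/-- The quadratic equation, over the parameter `t`, of the catalytic part of the solution. -/
def SatisfiesQuadratic (t : ℚ⟦X⟧) (w : ℚ[X]⟦X⟧) : Prop :=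
  w = (1 - constSeries t ^ 2) * (catVar - 1) + constSeries t *
    ((1 + constSeries t + (1 - constSeries t) * (catVar - 1)) * w + constSeries t * w ^ 2)

/-- The solution of the functional equation in terms of the parameter `t` and of a root `w` of
`SatisfiesQuadratic`. -/
noncomputable def catalyticSolution (t : ℚ⟦X⟧) (w : ℚ[X]⟦X⟧) : ℚ[X]⟦X⟧ :=
  constSeries t * (1 - constSeries t - constSeries t ^ 2) +
    constSeries t * (1 - constSeries t ^ 2) * (catVar - 1) +
    ((1 - constSeries t) * (catVar - 1) - constSeries t) * constSeries t ^ 2 * w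

theorem X_dvd_constSeries {t : ℚ⟦X⟧} (ht : X ∣ t) : X ∣ constSeries t :=
  constSeries_X ▸ map_dvd constSeries ht

theorem SatisfiesQuadratic.evalOne_eq_zero {t : ℚ⟦X⟧} (ht : X ∣ t) {w : ℚ[X]⟦X⟧}
    (hw : SatisfiesQuadratic t w) : evalOne w = 0 := by
  have h := congrArg evalOne hw
  simp only [map_add, map_mul, map_sub, map_one, map_pow, evalOne_catVar,
    evalOne_constSeries] at h
  have hprod : evalOne w * (1 - t - t ^ 2 - t ^ 2 * evalOne w) = 0 := by linear_combination h
  refine (mul_eq_zero.1 hprod).resolve_right fun hzero => ?_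
  have hconst := congrArg constantCoeff hzero
  simp only [map_sub, map_mul, map_pow, map_one, map_zero, X_dvd_iff.1 ht] at hconst
  norm_num at hconst

theorem SatisfiesQuadratic.evalOne_catalyticSolution {t : ℚ⟦X⟧} (ht : X ∣ t) {w : ℚ[X]⟦X⟧}
    (hw : SatisfiesQuadratic t w) : evalOne (catalyticSolution t w) = t - t ^ 2 - t ^ 3 := by
  simp only [catalyticSolution, map_add, map_mul, map_sub, map_one, map_pow, evalOne_catVar,
    evalOne_constSeries, hw.evalOne_eq_zero ht]
  ring

theorem SatisfiesQuadratic.satisfiesCatalyticEq {t : ℚ⟦X⟧} (ht : X ∣ t)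
    (htX : t * (1 - t) ^ 2 = X) {w : ℚ[X]⟦X⟧} (hw : SatisfiesQuadratic t w) :
    SatisfiesCatalyticEq (catalyticSolution t w) := by
  have hX : constSeries t * (1 - constSeries t) ^ 2 = X := by
    rw [← constSeries_X, ← htX, map_mul, map_pow, map_sub, map_one]
  rw [SatisfiesCatalyticEq, catalyticKernel, hw.evalOne_catalyticSolution ht]
  simp only [map_add, map_sub, map_pow, constSeries_X, catalyticSolution]
  rw [← hX]
  rw [SatisfiesQuadratic] at hw
  linear_combination
    ((1 - constSeries t) * (catVar - 1) - constSeries t) ^ 2 * constSeries t ^ 2 * hw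

theorem exists_satisfiesCatalyticEq {t : ℚ⟦X⟧} (ht : X ∣ t) (htX : t * (1 - t) ^ 2 = X) :
    ∃ L, SatisfiesCatalyticEq L ∧ X ∣ L ∧ evalOne L = t - t ^ 2 - t ^ 3 := by
  have hdvd := X_dvd_constSeries ht
  obtain ⟨w, hw⟩ : ∃ w, SatisfiesQuadratic t w := exists_eq_add_mul_quadratic hdvd _ _ _
  refine ⟨catalyticSolution t w, hw.satisfiesCatalyticEq ht htX, ?_,
    hw.evalOne_catalyticSolution ht⟩
  exact dvd_add (dvd_add (hdvd.mul_right _) ((hdvd.mul_right _).mul_right _))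
    (((dvd_pow hdvd two_ne_zero).mul_left _).mul_right _)

end Catalytic

namespace Code

open PowerSeries
open scoped Polynomial

/-- The generating series, by edges and root face degree, of nonseparable maps. -/
noncomputable def degreeSeries : ℚ[X]⟦X⟧ := PowerSeries.mk degreeEnumerator

/-- The generating series, by edges and root face degree, of nonseparable maps other than the
link. -/
noncomputable def nonLinkSeries : ℚ[X]⟦X⟧ := PowerSeries.mk nonLinkEnumerator

/-- The generating series of insertion sites. -/
noncomputable def siteSeries : ℚ[X]⟦X⟧ := PowerSeries.mk siteEnumerator

/-- The generating series, by edges, of nonseparable maps. -/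
noncomputable def countSeries : ℚ⟦X⟧ := PowerSeries.mk fun n => ((codes n).card : ℚ)

theorem degreeSeries_eq : degreeSeries = nonLinkSeries + X * catVar ^ 2 := by
  ext1 n
  rw [map_add, degreeSeries, nonLinkSeries, coeff_mk, coeff_mk, degreeEnumerator_eq, catVar,
    ← map_pow, mul_comm, coeff_C_mul, coeff_X, mul_ite, mul_one, mul_zero]

theorem evalOne_degreeSeries : evalOne degreeSeries = countSeries := by
  ext n
  rw [evalOne, degreeSeries, countSeries, coeff_map, coeff_mk, coeff_mk,
    Polynomial.coe_evalRingHom, eval_one_degreeEnumerator]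

theorem countSeries_eq : countSeries = evalOne nonLinkSeries + X := by
  rw [← evalOne_degreeSeries, degreeSeries_eq, map_add, map_mul, map_pow, evalOne_catVar, evalOne_X,
    one_pow, mul_one]

theorem catVar_sub_one_mul_siteSeries :
    (catVar - 1) * siteSeries = catalyticKernel nonLinkSeries := by
  rw [catalyticKernel, ← countSeries_eq, ← evalOne_degreeSeries, ← degreeSeries_eq]
  ext1 n
  rw [catVar_sub_one, siteSeries, coeff_C_mul, coeff_mk, sub_one_mul_siteEnumerator, map_sub,
    degreeSeries, coeff_mk, catVar, coeff_C_mul, constSeries, evalOne, coeff_map, coeff_map,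
    coeff_mk, Polynomial.coe_evalRingHom]

theorem nonLinkSeries_eq : nonLinkSeries = X * catVar + siteSeries * nonLinkSeries := by
  ext1 n
  rw [map_add, mul_comm X, catVar, coeff_C_mul, coeff_X, mul_ite, mul_one, mul_zero, coeff_mul]
  simp only [nonLinkSeries, siteSeries, coeff_mk]
  exact nonLinkEnumerator_eq n

theorem satisfiesCatalyticEq_nonLinkSeries : SatisfiesCatalyticEq nonLinkSeries := by
  rw [SatisfiesCatalyticEq, ← catVar_sub_one_mul_siteSeries]
  linear_combination (catVar - 1) * nonLinkSeries_eq

theorem X_dvd_nonLinkSeries : X ∣ nonLinkSeries := by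
  classical
  rw [X_dvd_iff, ← coeff_zero_eq_constantCoeff_apply, nonLinkSeries, coeff_mk, nonLinkEnumerator,
    nonLinkCodes, codes_zero, Finset.erase_empty, Finset.sum_empty]

theorem coeff_countSeries (k : ℕ) : coeff k countSeries = (codes k).card := coeff_mk k _

theorem satisfiesODE_countSeries : SatisfiesODE countSeries := by
  obtain ⟨t, ht, htX⟩ := exists_mul_one_sub_sq_eq_X ℚ
  obtain ⟨L, hL, hdvd, heval⟩ := exists_satisfiesCatalyticEq ht htX
  have hcount : countSeries = 2 * t - 3 * t ^ 2 := by
    rw [countSeries_eq, satisfiesCatalyticEq_nonLinkSeries.unique hL X_dvd_nonLinkSeries hdvd,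
      heval]
    linear_combination -htX
  exact hcount ▸ satisfiesODE_of_parametrization htX

theorem card_codes_one : ((codes 1).card : ℚ) = 2 := by
  have h := satisfiesODE_countSeries.coeff_one
  rw [coeff_countSeries, coeff_countSeries, codes_zero, Finset.card_empty, Nat.cast_zero] at h
  linarith

theorem card_codes_mul_factorial {k : ℕ} (hk : 1 ≤ k) :
    (codes k).card * (k.factorial * (2 * k - 1).factorial) = 2 * (3 * k - 3).factorial := by
  have hrec (n : ℕ) (hn : n ≠ 0) := satisfiesODE_countSeries.coeff_succ hn
  simp only [coeff_countSeries] at hrec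
  exact_mod_cast mul_factorial_eq_of_recurrence (c := fun n => ((codes n).card : ℚ))
    card_codes_one hrec hk

end Code

/-- **Tutte.** The number of rooted 2-connected planar maps with
`k` edges satisfies `C_0 = 1` and `C_k = 2 · (3k-3)! / (k! · (2k-1)!)` for `k ≥ 1`. -/
theorem tutte_two_connected_count :
    bconnCount 0 = 1 ∧
    ∀ k : ℕ, 1 ≤ k →
      bconnCount k * (Nat.factorial k * Nat.factorial (2 * k - 1)) =
        2 * Nat.factorial (3 * k - 3) := by
  refine ⟨if_pos rfl, fun k hk => ?_⟩
  rw [bconnCount_eq_card_codes (Nat.one_le_iff_ne_zero.1 hk), ← Code.card_codes]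
  exact Code.card_codes_mul_factorial hk
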